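/- arXiv:1802.09066 — 2 statements merged into one kernel-verified Lean document; each statement's English description precedes it below -/
import Mathlib

section
/- There exist absolute constants c > 0 and C > 0 such that for every odd prime p and every A ⊆ F_p with |A| ≥ 2, at least one of the following holds: |A+A| ≥ (1/5)·min{|A|^{6/5}, p/2}, or |A·A| ≥ c·min{p·|A|^{−2/5}, |A|^{6/5}}·(log|A|)^{−C}. -/
open Finset

/-- The sumset `A + A = {a + a' : a, a' ∈ A}`. -/
def sumSet (p : ℕ) (A : Finset (ZMod p)) : Finset (ZMod p) :=
  (A ×ˢ A).image fun x => x.1 + x.2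

/-- The product set `A·A = {a·a' : a, a' ∈ A}`. -/
def prodSet (p : ℕ) (A : Finset (ZMod p)) : Finset (ZMod p) :=
  (A ×ˢ A).image fun x => x.1 * x.2


section SP
open MvPolynomial

theorem sp_card_mon (N : ℕ) :
    6 * Nat.card {n : Fin 3 →₀ ℕ | (n.sum fun _ e => e) ≤ N} = (N+1)*(N+2)*(N+3) := by
  classical
  have hset : {n : Fin 3 →₀ ℕ | (n.sum fun _ e => e) ≤ N}
      = ↑((Finset.range (N+1)).biUnion fun i => (Finset.univ : Finset (Fin 3)).finsuppAntidiag i) := by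
    ext n
    simp [Finset.mem_finsuppAntidiag, Finsupp.sum_fintype]
  rw [hset, Nat.card_coe_set_eq, Set.ncard_coe_finset, Finset.card_biUnion]
  · simp only [Finset.card_finsuppAntidiag_nat_eq_choose, Finset.card_univ, Fintype.card_fin]
    induction N with
    | zero => simp
    | succ N ih =>
      rw [Finset.sum_range_succ, mul_add, ih (by
        ext n
        simp [Finset.mem_finsuppAntidiag, Finsupp.sum_fintype])]
      have h : (3 + (N+1) - 1).choose (N+1) = (N+3).choose 2 := by
        rw [show 3 + (N+1) - 1 = N+3 by omega, ← Nat.choose_symm_of_eq_add (show N+3 = 2 + (N+1) by ring)]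
      have h2 := Nat.triangle_succ (N+2)
      have h3 := Finset.sum_range_id_mul_two (N+3)
      have h4 : (N+3).choose 2 * 2 = (N+3) * (N+2) := by
        rw [Nat.choose_two_right]
        have : 2 ∣ (N+3) * (N+3-1) := (Nat.even_mul_pred_self _).two_dvd
        rw [Nat.div_mul_cancel this]; rfl
      rw [h]; nlinarith
  · intro i _ j _ hij
    rw [Function.onFun, Finset.disjoint_left]
    intro n hn hn'
    simp only [Finset.mem_finsuppAntidiag] at hn hn'
    exact hij (hn.1.symm.trans hn'.1)

variable {K : Type*} [Field K]

theorem sp_finrank (N : ℕ) :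
    6 * Module.finrank K (restrictTotalDegree (Fin 3) K N) = (N+1)*(N+2)*(N+3) := by
  rw [← sp_card_mon N]
  congr 1
  exact Module.finrank_eq_nat_card_basis (basisRestrictSupport K _)

/-- restriction to the line `v = p.1, w = p.2.1 * u + p.2.2` -/
noncomputable def resL (p : K × K × K) : MvPolynomial (Fin 3) K →ₐ[K] Polynomial K :=
  aeval ![Polynomial.X, Polynomial.C p.1, Polynomial.C p.2.1 * Polynomial.X + Polynomial.C p.2.2]

noncomputable def resM (q : K × K × K) : MvPolynomial (Fin 3) K →ₐ[K] Polynomial K :=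
  aeval ![Polynomial.C q.1, Polynomial.X, Polynomial.C q.2.1 * Polynomial.X + Polynomial.C q.2.2]

def incid (p q : K × K × K) : Prop := p.2.1 * q.1 + p.2.2 = q.2.1 * p.1 + q.2.2

theorem eval_resL (p : K × K × K) (F : MvPolynomial (Fin 3) K) (x : K) :
    (resL p F).eval x = MvPolynomial.eval ![x, p.1, p.2.1 * x + p.2.2] F := by
  have : (Polynomial.aeval x).comp (resL p) = MvPolynomial.aeval ![x, p.1, p.2.1 * x + p.2.2] := by
    apply MvPolynomial.algHom_ext
    intro i; fin_cases i <;> simp [resL]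
  have h := congrArg (fun f => f F) this
  simpa [Polynomial.coe_aeval_eq_eval, MvPolynomial.coe_aeval_eq_eval] using h

theorem eval_resM (q : K × K × K) (F : MvPolynomial (Fin 3) K) (x : K) :
    (resM q F).eval x = MvPolynomial.eval ![q.1, x, q.2.1 * x + q.2.2] F := by
  have : (Polynomial.aeval x).comp (resM q) = MvPolynomial.aeval ![q.1, x, q.2.1 * x + q.2.2] := by
    apply MvPolynomial.algHom_ext
    intro i; fin_cases i <;> simp [resM]
  have h := congrArg (fun f => f F) this
  simpa [Polynomial.coe_aeval_eq_eval, MvPolynomial.coe_aeval_eq_eval] using h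

theorem incid_eval (p q : K × K × K) (h : incid p q) (F : MvPolynomial (Fin 3) K) :
    (resL p F).eval q.1 = (resM q F).eval p.1 := by
  rw [eval_resL, eval_resM, h]

theorem natDegree_resL (p : K × K × K) (F : MvPolynomial (Fin 3) K) :
    (resL p F).natDegree ≤ F.totalDegree := by
  have := aeval_natDegree_le (n := 1) F le_rfl
    ![Polynomial.X, Polynomial.C p.1, Polynomial.C p.2.1 * Polynomial.X + Polynomial.C p.2.2] (by
      intro i; fin_cases i
      · simp
      · simp
      · exact Polynomial.natDegree_linear_le)
  simpa [resL] using this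

theorem natDegree_resM (p : K × K × K) (F : MvPolynomial (Fin 3) K) :
    (resM p F).natDegree ≤ F.totalDegree := by
  have := aeval_natDegree_le (n := 1) F le_rfl
    ![Polynomial.C p.1, Polynomial.X, Polynomial.C p.2.1 * Polynomial.X + Polynomial.C p.2.2] (by
      intro i; fin_cases i
      · simp
      · simp
      · exact Polynomial.natDegree_linear_le)
  simpa [resM] using this

theorem sp_interp (Q : Finset (K × K × K)) (D : ℕ) (hD : 6 * Q.card < (D+2)*(D+3)) :
    ∃ F : MvPolynomial (Fin 3) K, F ≠ 0 ∧ F.totalDegree ≤ D ∧ ∀ q ∈ Q, resM q F = 0 := by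
  classical
  let Θ : restrictTotalDegree (Fin 3) K D →ₗ[K] (Q → Polynomial.degreeLT K (D+1)) :=
    LinearMap.pi fun q => LinearMap.codRestrict _
      ((resM q.1).toLinearMap ∘ₗ (restrictTotalDegree (Fin 3) K D).subtype) (by
        intro c
        have hc := (mem_restrictTotalDegree _ _ _).1 c.2
        rw [Polynomial.mem_degreeLT]
        have := natDegree_resM q.1 c.1
        exact lt_of_le_of_lt Polynomial.degree_le_natDegree
          (by exact_mod_cast (by simpa using Nat.lt_succ_of_le (this.trans hc))))
  have hfr : Module.finrank K (Q → Polynomial.degreeLT K (D+1)) = Q.card * (D+1) := by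
    rw [Module.finrank_pi_fintype]
    simp [LinearEquiv.finrank_eq (Polynomial.degreeLTEquiv K (D+1))]
  have : Module.Finite K (Polynomial.degreeLT K (D+1)) :=
    Module.Finite.equiv (Polynomial.degreeLTEquiv K (D+1)).symm
  have hlt : Module.finrank K (Q → Polynomial.degreeLT K (D+1)) <
      Module.finrank K (restrictTotalDegree (Fin 3) K D) := by
    rw [hfr]
    have := sp_finrank (K := K) D
    nlinarith
  obtain ⟨x, hx, hx0⟩ := Submodule.exists_mem_ne_zero_of_ne_bot
    (LinearMap.ker_ne_bot_of_finrank_lt (f := Θ) hlt)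
  refine ⟨x.1, by simpa using hx0, (mem_restrictTotalDegree _ _ _).1 x.2, ?_⟩
  intro q hq
  have h1 : Θ x = 0 := hx
  have h2 := congrArg Subtype.val (congrFun h1 ⟨q, hq⟩)
  simpa [Θ] using h2

theorem sp_totalDegree_pderiv (i : Fin 3) (F : MvPolynomial (Fin 3) K) (h : pderiv i F ≠ 0) :
    (pderiv i F).totalDegree + 1 ≤ F.totalDegree := by
  classical
  have : ∀ m ∈ (pderiv i F).support, (m.sum fun _ e => e) + 1 ≤ F.totalDegree := by
    intro m hm
    rw [mem_support_iff, coeff_pderiv] at hm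
    have h1 : m + Finsupp.single i 1 ∈ F.support := by
      rw [mem_support_iff]; intro h0; exact hm (by simp [h0])
    have h2 := le_totalDegree h1
    rw [Finsupp.sum_add_index' (by simp) (by simp)] at h2
    simpa using h2
  obtain ⟨m, hm⟩ := Finset.nonempty_of_ne_empty (mt support_eq_empty.1 h)
  have h1 := this m hm
  have : (pderiv i F).totalDegree ≤ F.totalDegree - 1 :=
    Finset.sup_le fun m hm => by have := this m hm; omega
  omega

theorem sp_totalDegree_pderiv_le (i : Fin 3) (F : MvPolynomial (Fin 3) K) :
    (pderiv i F).totalDegree ≤ F.totalDegree := by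
  by_cases h : pderiv i F = 0
  · simp [h]
  · have := sp_totalDegree_pderiv i F h; omega

theorem sp_not_mem_vars (p : ℕ) [CharP K p] (i : Fin 3) (F : MvPolynomial (Fin 3) K)
    (hd : F.totalDegree < p) (h : pderiv i F = 0) : i ∉ F.vars := by
  classical
  rw [mem_vars_iff_mem_support]
  rintro ⟨s, hs, hi⟩
  have hsi : s i ≠ 0 := by simpa using hi
  have h1 := coeff_pderiv (i := i) F (s - Finsupp.single i 1)
  rw [h, coeff_zero] at h1
  have hle : Finsupp.single i 1 ≤ s := by
    rw [Finsupp.single_le_iff]; omega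
  rw [tsub_add_cancel_of_le hle] at h1
  have h2 : s i ≤ F.totalDegree := by
    refine le_trans ?_ (le_totalDegree hs)
    rw [Finsupp.sum]
    exact Finset.single_le_sum (f := fun j => s j) (fun _ _ => Nat.zero_le _) hi
  have h3 : ((s i : ℕ) : K) ≠ 0 := by
    intro h0
    rw [CharP.cast_eq_zero_iff K p] at h0
    have := Nat.le_of_dvd (Nat.pos_of_ne_zero hsi) h0
    omega
  rw [mem_support_iff] at hs
  have h4 : (((s - Finsupp.single i 1 : Fin 3 →₀ ℕ) i : ℕ) : K) + 1 = (s i : ℕ) := by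
    rw [Finsupp.tsub_apply, Finsupp.single_eq_same]
    norm_cast
    rw [Nat.sub_add_cancel (by omega)]
  rw [h4] at h1
  rcases mul_eq_zero.1 h1.symm with h5 | h5
  · exact hs h5
  · exact h3 h5

end SP


section SP
open MvPolynomial
variable {K : Type*} [Field K]

/-- a polynomial vanishing on line `q` and not on line `p` -/
noncomputable def sepL [DecidableEq K] (p q : K × K × K) : MvPolynomial (Fin 3) K :=
  if p.1 = q.1 then X 2 - C q.2.1 * X 0 - C q.2.2 else X 1 - C q.1

theorem sepL_self [DecidableEq K] (p q : K × K × K) : resL q (sepL p q) = 0 := by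
  unfold sepL
  split_ifs with h
  · simp [resL]
  · simp [resL]

theorem sepL_ne [DecidableEq K] (p q : K × K × K) (h : p ≠ q) : resL p (sepL p q) ≠ 0 := by
  unfold sepL
  split_ifs with h1
  · intro h0
    have e0 := congrArg (Polynomial.eval 0) h0
    have e1 := congrArg (Polynomial.eval 1) h0
    simp [resL] at e0 e1
    apply h
    have e2 : p.2.2 = q.2.2 := by linear_combination e0
    have e3 : p.2.1 = q.2.1 := by linear_combination e1 - e0
    exact Prod.ext h1 (Prod.ext e3 e2)
  · intro h0
    have e0 := congrArg (Polynomial.eval 0) h0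
    simp [resL] at e0
    exact h1 (by linear_combination e0)

theorem sepL_deg [DecidableEq K] (p q : K × K × K) : (sepL p q).totalDegree ≤ 1 := by
  unfold sepL
  split_ifs with h1
  · refine (totalDegree_sub_C_le _ _).trans ((totalDegree_sub _ _).trans (max_le ?_ ?_))
    · simp
    · refine (totalDegree_mul _ _).trans ?_
      simp
  · refine (totalDegree_sub_C_le _ _).trans ?_
    simp

theorem sp_bezout_arith (d e r M T : ℕ) (hcon : d * e < r) (hM : M = r * r + r)
    (hTr : T + r = M + d + e + 2)
    (key : (M+e+1)*(M+e+2)*(M+e+3) + (M+d+1)*(M+d+2)*(M+d+3) + 6 * (r * T)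
     ≤ (M+d+e+1)*(M+d+e+2)*(M+d+e+3) + (M+1)*(M+2)*(M+3)) : False := by
  zify at key hTr hM hcon
  have key2 : 2 * (r:ℤ) * T ≤ d * e * (2 * M + 4 + d + e) := by
    nlinarith [key]
  have hT' : (T:ℤ) = M + d + e + 2 - r := by linarith
  rw [hT'] at key2
  have h1 : (d:ℤ) * e + 1 ≤ r := hcon
  have h2 : (0:ℤ) ≤ M + d + e + 2 := by positivity
  have h3 : (0:ℤ) ≤ d * e * (d + e) := by positivity
  have h4 : (0:ℤ) ≤ d := by positivity
  have h5 : (0:ℤ) ≤ e := by positivity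
  have h6 : (0:ℤ) ≤ r := by positivity
  nlinarith [mul_le_mul_of_nonneg_right h1 h2]

theorem sp_bezout (F G : MvPolynomial (Fin 3) K) (hF : Prime F) (hG : ¬ F ∣ G)
    (S : Finset (K × K × K)) (hSF : ∀ p ∈ S, resL p F = 0) (hSG : ∀ p ∈ S, resL p G = 0) :
    S.card ≤ F.totalDegree * G.totalDegree := by
  classical
  by_contra hcon
  push Not at hcon
  set d := F.totalDegree with hd
  set e := G.totalDegree with he
  set r := S.card with hr
  have hG0 : G ≠ 0 := fun h => hG (h ▸ dvd_zero _)
  have hF0 := hF.ne_zero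
  set M := r * r + r with hM
  let E : (K × K × K) → MvPolynomial (Fin 3) K := fun p => ∏ q ∈ S.erase p, sepL p q
  have hE1 : ∀ p ∈ S, ∀ q ∈ S, p ≠ q → resL q (E p) = 0 := by
    intro p hp q hq hpq
    simp only [E, map_prod]
    exact Finset.prod_eq_zero (Finset.mem_erase.2 ⟨hpq.symm, hq⟩) (sepL_self p q)
  have hE2 : ∀ p ∈ S, resL p (E p) ≠ 0 := by
    intro p hp
    simp only [E, map_prod]
    exact Finset.prod_ne_zero_iff.2 fun q hq => sepL_ne p q (Finset.mem_erase.1 hq).1.symm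
  have hE3 : ∀ p ∈ S, (E p).totalDegree + 1 ≤ r := by
    intro p hp
    have h1 : (E p).totalDegree ≤ ∑ q ∈ S.erase p, (sepL p q).totalDegree :=
      totalDegree_finsetProd _ _
    have h2 : ∑ q ∈ S.erase p, (sepL p q).totalDegree ≤ ∑ q ∈ S.erase p, 1 :=
      Finset.sum_le_sum fun q _ => sepL_deg p q
    have h3 := Finset.card_erase_add_one hp
    simp at h2
    omega
  set T := M + d + e + 2 - r with hT
  have hrM : r ≤ M := by rw [hM]; exact Nat.le_add_left _ _
  have : Module.Finite K (Polynomial.degreeLT K T) :=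
    Module.Finite.equiv (Polynomial.degreeLTEquiv K T).symm
  let V := fun n => restrictTotalDegree (Fin 3) K n
  let inj : Polynomial K →ₐ[K] MvPolynomial (Fin 3) K := Polynomial.aeval (X 0)
  have hinj : ∀ p c, resL p (inj c) = c := by
    intro p c
    have : (resL p).comp inj = AlgHom.id K _ := by
      apply Polynomial.algHom_ext
      simp [inj, resL]
    exact congrArg (fun f => f c) this
  have hinjdeg : ∀ c : Polynomial K, (inj c).totalDegree ≤ c.natDegree := by
    intro c
    simp only [inj, Polynomial.aeval_eq_sum_range]
    refine totalDegree_finsetSum_le fun i hi => ?_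
    refine (totalDegree_smul_le _ _).trans ?_
    rw [totalDegree_X_pow]
    simp at hi; omega
  let Θ : (V (M+e) × V (M+d) × (S → Polynomial.degreeLT K T)) →ₗ[K] MvPolynomial (Fin 3) K :=
    (LinearMap.mulLeft K F ∘ₗ (V (M+e)).subtype).coprod
      ((LinearMap.mulLeft K G ∘ₗ (V (M+d)).subtype).coprod
        (∑ p : S, LinearMap.mulLeft K (E p.1) ∘ₗ inj.toLinearMap ∘ₗ
          (Polynomial.degreeLT K T).subtype ∘ₗ LinearMap.proj p))
  have hΘ : ∀ a b c, Θ (a, b, c) = F * a.1 + (G * b.1 + ∑ p : S, E p.1 * inj (c p).1) := by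
    intro a b c
    simp [Θ]
  let Ψ : V M →ₗ[K] (V (M+e) × V (M+d) × (S → Polynomial.degreeLT K T)) :=
    (LinearMap.codRestrict (V (M+e)) (LinearMap.mulLeft K G ∘ₗ (V M).subtype) (by
      intro c
      have := (mem_restrictTotalDegree _ _ _).1 c.2
      refine (mem_restrictTotalDegree _ _ _).2 ((totalDegree_mul _ _).trans ?_)
      simp only [Submodule.subtype_apply]; omega)).prod
    ((LinearMap.codRestrict (V (M+d)) (-(LinearMap.mulLeft K F ∘ₗ (V M).subtype)) (by
      intro c
      have := (mem_restrictTotalDegree _ _ _).1 c.2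
      refine (mem_restrictTotalDegree _ _ _).2 ?_
      simp only [LinearMap.neg_apply, totalDegree_neg]
      refine ((totalDegree_mul _ _).trans ?_)
      simp only [Submodule.subtype_apply]; omega)).prod 0)
  have hker : LinearMap.ker Θ ≤ LinearMap.range Ψ := by
    rintro ⟨a, b, c⟩ h
    rw [LinearMap.mem_ker, hΘ] at h
    have hc : c = 0 := by
      funext p
      have h1 := congrArg (resL p.1) h
      simp only [map_add, map_mul, map_sum, hSF p.1 p.2, hSG p.1 p.2, zero_mul, zero_add, map_zero,
        hinj] at h1
      rw [Finset.sum_eq_single p] at h1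
      · rcases mul_eq_zero.1 h1 with h2 | h2
        · exact absurd h2 (hE2 p.1 p.2)
        · exact Subtype.ext h2
      · intro q _ hq
        rw [hE1 q.1 q.2 p.1 p.2 (fun h => hq (Subtype.ext h)), zero_mul]
      · simp
    subst hc
    simp only [Pi.zero_apply, ZeroMemClass.coe_zero, map_zero, mul_zero, Finset.sum_const_zero,
      add_zero] at h
    have hdvd : F ∣ G * b.1 := ⟨-a.1, by linear_combination h⟩
    obtain ⟨c', hc'⟩ := (hF.dvd_or_dvd hdvd).resolve_left hG
    have ha : a.1 = G * (-c') := by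
      apply mul_left_cancel₀ hF0
      rw [hc'] at h
      linear_combination h
    have hdeg : (-c').totalDegree ≤ M := by
      by_cases h0 : c' = 0
      · simp [h0]
      have h1 := (mem_restrictTotalDegree _ _ _).1 a.2
      rw [ha, totalDegree_mul_of_isDomain hG0 (neg_ne_zero.2 h0)] at h1
      omega
    refine ⟨⟨-c', (mem_restrictTotalDegree _ _ _).2 hdeg⟩, ?_⟩
    ext1
    · exact Subtype.ext (by simp [Ψ, ha])
    ext1
    · exact Subtype.ext (by simp [Ψ, hc'])
    · rfl
  have hrange : LinearMap.range Θ ≤ V (M+d+e) := by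
    rintro _ ⟨⟨a, b, c⟩, rfl⟩
    rw [hΘ]
    have h1 := (mem_restrictTotalDegree _ _ _).1 a.2
    have h2 := (mem_restrictTotalDegree _ _ _).1 b.2
    refine (V (M+d+e)).add_mem ?_ ((V (M+d+e)).add_mem ?_ ((V (M+d+e)).sum_mem fun p _ => ?_))
    · refine (mem_restrictTotalDegree _ _ _).2 ((totalDegree_mul _ _).trans ?_); omega
    · refine (mem_restrictTotalDegree _ _ _).2 ((totalDegree_mul _ _).trans ?_); omega
    · refine (mem_restrictTotalDegree _ _ _).2 ((totalDegree_mul _ _).trans ?_)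
      have h3 := hE3 p.1 p.2
      have h4 := hinjdeg (c p).1
      by_cases h0 : (c p).1 = 0
      · rw [h0]; simp; omega
      have h5 := Polynomial.mem_degreeLT.1 (c p).2
      rw [← Polynomial.natDegree_lt_iff_degree_lt h0] at h5
      omega
  have k1 : Module.finrank K (LinearMap.ker Θ) ≤ Module.finrank K (V M) :=
    (Submodule.finrank_mono hker).trans (LinearMap.finrank_range_le Ψ)
  have k2 : Module.finrank K (LinearMap.range Θ) ≤ Module.finrank K (V (M+d+e)) :=
    Submodule.finrank_mono hrange
  have k3 := LinearMap.finrank_range_add_finrank_ker Θ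
  have k4 : Module.finrank K (S → Polynomial.degreeLT K T) = r * T := by
    rw [Module.finrank_pi_fintype]
    simp [LinearEquiv.finrank_eq (Polynomial.degreeLTEquiv K T), hr]
  rw [Module.finrank_prod, Module.finrank_prod, k4] at k3
  have f1 := sp_finrank (K := K) M
  have f2 := sp_finrank (K := K) (M+e)
  have f3 := sp_finrank (K := K) (M+d)
  have f4 := sp_finrank (K := K) (M+d+e)
  have hTr : T + r = M + d + e + 2 := by omega
  simp only [V] at k1 k2 k3
  have key : (M+e+1)*(M+e+2)*(M+e+3) + (M+d+1)*(M+d+2)*(M+d+3) + 6 * (r * T)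
     ≤ (M+d+e+1)*(M+d+e+2)*(M+d+e+3) + (M+1)*(M+2)*(M+3) := by
    rw [← f1, ← f2, ← f3, ← f4]; omega
  exact sp_bezout_arith d e r M T hcon hM hTr key

theorem sp_bezout_inf (F G : MvPolynomial (Fin 3) K) (hF : Prime F)
    (S : Set (K × K × K)) (hS : S.Infinite) (hSF : ∀ p ∈ S, resL p F = 0)
    (hSG : ∀ p ∈ S, resL p G = 0) : F ∣ G := by
  by_contra hG
  obtain ⟨T, hT, hc⟩ := hS.exists_subset_card_eq (F.totalDegree * G.totalDegree + 1)
  have := sp_bezout F G hF hG T (fun p hp => hSF p (hT hp)) (fun p hp => hSG p (hT hp))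
  omega

end SP


section SP
open MvPolynomial
variable {K : Type*} [Field K]

theorem sp_chain {S : Type*} [CommRing S] [Algebra K S] (D : S →+ S)
    (hmul : ∀ a b, D (a * b) = a * D b + b * D a) (hD : ∀ k : K, D (algebraMap K S k) = 0) (g : Fin 3 → S) (F : MvPolynomial (Fin 3) K) :
    D (aeval g F) = ∑ i, aeval g (pderiv i F) * D (g i) := by
  induction F using MvPolynomial.induction_on with
  | C a => simp [hD]
  | add p q hp hq => simp only [map_add, hp, hq, add_mul, Finset.sum_add_distrib]
  | mul_X p i hp =>
    simp only [map_mul, aeval_X, Derivation.leibniz, smul_eq_mul, hmul, hp, map_add, add_mul,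
      Finset.sum_add_distrib, Finset.mul_sum]
    congr 1
    · rw [Finset.sum_eq_single i]
      · simp
      · intro j _ hj
        rw [pderiv_X_of_ne (Ne.symm hj)]; simp
      · simp
    · refine Finset.sum_congr rfl fun j _ => by ring

noncomputable def spT (F : MvPolynomial (Fin 3) K) :
    Derivation K (MvPolynomial (Fin 3) K) (MvPolynomial (Fin 3) K) :=
  pderiv 2 F • pderiv 0 - pderiv 0 F • pderiv 2

theorem spT_apply (F G : MvPolynomial (Fin 3) K) :
    spT F G = pderiv 2 F * pderiv 0 G - pderiv 0 F * pderiv 2 G := by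
  simp [spT]

noncomputable def spD (F : MvPolynomial (Fin 3) K) : MvPolynomial (Fin 3) K :=
  pderiv 2 F * spT F (pderiv 0 F) - pderiv 0 F * spT F (pderiv 2 F)

noncomputable def spPhi (F G : MvPolynomial (Fin 3) K) : Polynomial (MvPolynomial (Fin 3) K) :=
  aeval ![Polynomial.C (X 0) + Polynomial.X * Polynomial.C (pderiv 2 F), Polynomial.C (X 1),
    Polynomial.C (X 2) - Polynomial.X * Polynomial.C (pderiv 0 F)] G

theorem spPhi_derivative (F G : MvPolynomial (Fin 3) K) :
    Polynomial.derivative (spPhi F G) = spPhi F (pderiv 0 G) * Polynomial.C (pderiv 2 F)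
      - spPhi F (pderiv 2 G) * Polynomial.C (pderiv 0 F) := by
  have h := sp_chain (K := K)
    (D := (Polynomial.derivative (R := MvPolynomial (Fin 3) K)).toAddMonoidHom)
    (by intro a b; simp only [LinearMap.toAddMonoidHom_coe, Polynomial.derivative_mul]; ring)
    (by intro k; simp [IsScalarTower.algebraMap_apply K (MvPolynomial (Fin 3) K) (Polynomial (MvPolynomial (Fin 3) K))])
    ![Polynomial.C (X 0) + Polynomial.X * Polynomial.C (pderiv 2 F), Polynomial.C (X 1),
    Polynomial.C (X 2) - Polynomial.X * Polynomial.C (pderiv 0 F)] G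
  simp only [Fin.sum_univ_three] at h
  simp only [spPhi]
  refine h.trans ?_
  simp
  ring

theorem sp_mapc {R : Type*} [CommRing R] (d : R →+ R) (hd : ∀ a b, d (a * b) = a * d b + b * d a) :
    ∃ D : Polynomial R →+ Polynomial R,
      (∀ a b, D (a * b) = a * D b + b * D a) ∧ (∀ a, D (Polynomial.C a) = Polynomial.C (d a))
      ∧ D Polynomial.X = 0 ∧ ∀ P j, (D P).coeff j = d (P.coeff j) := by
  have h1 : d 1 = 0 := by have := hd 1 1; simpa using this
  let f : Polynomial R → Polynomial R := fun P => ∑ i ∈ P.support, Polynomial.monomial i (d (P.coeff i))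
  have hf : ∀ P j, (f P).coeff j = d (P.coeff j) := by
    intro P j
    simp only [f, Polynomial.finset_sum_coeff, Polynomial.coeff_monomial]
    rw [Finset.sum_ite_eq']
    split_ifs with h
    · rfl
    · rw [Polynomial.notMem_support_iff.1 h, map_zero]
  refine ⟨⟨⟨f, ?_⟩, ?_⟩, ?_, ?_, ?_, hf⟩
  · ext j; rw [hf]; simp
  · intro a b; ext j; rw [Polynomial.coeff_add, hf, hf, hf]; simp
  · intro a b
    ext j
    simp only [AddMonoidHom.coe_mk, ZeroHom.coe_mk, Polynomial.coeff_add]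
    rw [hf, mul_comm b, Polynomial.coeff_mul, Polynomial.coeff_mul, Polynomial.coeff_mul, map_sum, ← Finset.sum_add_distrib]
    refine Finset.sum_congr rfl fun x _ => ?_
    rw [hf, hf, hd]; ring
  · intro a; ext j
    simp only [AddMonoidHom.coe_mk, ZeroHom.coe_mk]
    rw [hf, Polynomial.coeff_C, Polynomial.coeff_C]; split_ifs <;> simp
  · ext j
    simp only [AddMonoidHom.coe_mk, ZeroHom.coe_mk]
    rw [hf, Polynomial.coeff_X]; split_ifs <;> simp [h1]

theorem spPhi_T (F G : MvPolynomial (Fin 3) K) :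
    ∃ Y : Polynomial (MvPolynomial (Fin 3) K), (∀ j, Y.coeff j = spT F ((spPhi F G).coeff j)) ∧
     Y = spPhi F (pderiv 0 G) * (Polynomial.C (pderiv 2 F) + Polynomial.X * Polynomial.C (spT F (pderiv 2 F)))
      - spPhi F (pderiv 2 G) * (Polynomial.C (pderiv 0 F) + Polynomial.X * Polynomial.C (spT F (pderiv 0 F))) := by
  obtain ⟨D, hDm, hDC, hDX, hDc⟩ := sp_mapc (spT F : MvPolynomial (Fin 3) K →+ _)
    (fun a b => (spT F).leibniz a b)
  replace hDC : ∀ a, D (Polynomial.C a) = Polynomial.C (spT F a) := hDC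
  refine ⟨D (spPhi F G), fun j => hDc _ j, ?_⟩
  have h := sp_chain (K := K) D hDm
    (by intro k
        rw [IsScalarTower.algebraMap_apply K (MvPolynomial (Fin 3) K) (Polynomial (MvPolynomial (Fin 3) K)),
          Polynomial.algebraMap_eq, hDC]
        simp [algebraMap_eq])
    ![Polynomial.C (X 0) + Polynomial.X * Polynomial.C (pderiv 2 F), Polynomial.C (X 1),
    Polynomial.C (X 2) - Polynomial.X * Polynomial.C (pderiv 0 F)] G
  simp only [Fin.sum_univ_three] at h
  simp only [Matrix.cons_val_zero, Matrix.cons_val_one, Matrix.cons_val, map_add, map_sub,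
    hDm, hDC, hDX, mul_zero, add_zero] at h
  have e0 : spT F (X 0) = pderiv 2 F := by
    rw [spT_apply, pderiv_X_self, pderiv_X_of_ne (by decide)]; ring
  have e1 : spT F (X 1) = 0 := by
    rw [spT_apply, pderiv_X_of_ne (by decide), pderiv_X_of_ne (by decide)]; ring
  have e2 : spT F (X 2) = - pderiv 0 F := by
    rw [spT_apply, pderiv_X_self, pderiv_X_of_ne (by decide)]; ring
  rw [e0, e1, e2] at h
  simp only [spPhi]
  rw [h, map_neg, map_zero]; ring

theorem spPhi_zero (F G : MvPolynomial (Fin 3) K) : (spPhi F G).coeff 0 = G := by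
  induction G using MvPolynomial.induction_on with
  | C a =>
    simp [spPhi, IsScalarTower.algebraMap_apply K (MvPolynomial (Fin 3) K) (Polynomial (MvPolynomial (Fin 3) K)), algebraMap_eq]
  | add p q hp hq =>
    simp only [spPhi, map_add, Polynomial.coeff_add] at hp hq ⊢
    rw [hp, hq]
  | mul_X p i hp =>
    simp only [spPhi, map_mul, Polynomial.mul_coeff_zero] at hp ⊢
    rw [hp]
    congr 1
    fin_cases i <;> simp

theorem spPhi_dvd (p : ℕ) [CharP K p] (F : MvPolynomial (Fin 3) K) (hF : Prime F)
    (hd : F.totalDegree < p) (hw : ¬ F ∣ pderiv 2 F) (hD : F ∣ spD F) (j : ℕ) :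
    F ∣ (spPhi F F).coeff j := by
  have hdeg : (spPhi F F).natDegree ≤ F.totalDegree := by
    have h1 : spPhi F F = aeval ![Polynomial.C (X 0) + Polynomial.X * Polynomial.C (pderiv 2 F),
        Polynomial.C (X 1), Polynomial.C (X 2) - Polynomial.X * Polynomial.C (pderiv 0 F)]
        (map (algebraMap K (MvPolynomial (Fin 3) K)) F) := by
      rw [aeval_map_algebraMap]; rfl
    rw [h1, ← mul_one F.totalDegree]
    refine aeval_natDegree_le _ ?_ _ ?_
    · exact Finset.sup_mono (support_map_subset _ _)
    · intro i; fin_cases i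
      · simp only [Fin.zero_eta, Matrix.cons_val_zero]
        compute_degree
      · simp
      · simp only [Fin.reduceFinMk, Matrix.cons_val]
        compute_degree
  have hT : ∀ G, F ∣ G → F ∣ spT F G := by
    rintro _ ⟨c, rfl⟩
    refine ⟨spT F c, ?_⟩
    rw [Derivation.leibniz]
    have : spT F F = 0 := by rw [spT_apply]; ring
    rw [this]; simp
  obtain ⟨Y, hY1, hY2⟩ := spPhi_T F F
  have h1 := spPhi_derivative F F
  have h3 : Y * Polynomial.C (pderiv 2 F) = Polynomial.derivative (spPhi F F) * Polynomial.C (pderiv 2 F)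
      + (Polynomial.derivative (spPhi F F) * Polynomial.X) * Polynomial.C (spT F (pderiv 2 F))
      - (spPhi F (pderiv 2 F) * Polynomial.X) * Polynomial.C (spD F) := by
    rw [hY2, h1, spD, map_sub, map_mul, map_mul]; ring
  have hdX : ∀ j, (Polynomial.derivative (spPhi F F) * Polynomial.X).coeff j
      = (spPhi F F).coeff j * j := by
    intro j
    cases j with
    | zero => simp
    | succ j => rw [Polynomial.coeff_mul_X, Polynomial.coeff_derivative]; push_cast; rfl
  by_cases hj : j ≤ F.totalDegree
  · induction j with
    | zero =>
      have : (spPhi F F).coeff 0 = F := by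
        exact spPhi_zero F F
      rw [this]
    | succ j ih =>
      have ih := ih (by omega)
      have hc := congrArg (fun P => Polynomial.coeff P j) h3
      simp only [Polynomial.coeff_sub, Polynomial.coeff_add, Polynomial.coeff_mul_C, hY1, hdX,
        Polynomial.coeff_derivative] at hc
      have hdv : F ∣ pderiv 2 F * ((spPhi F F).coeff (j+1) * ((j:MvPolynomial (Fin 3) K) + 1)) := by
        have : pderiv 2 F * ((spPhi F F).coeff (j+1) * ((j:MvPolynomial (Fin 3) K) + 1)) =
          spT F ((spPhi F F).coeff j) * pderiv 2 F
          - (spPhi F F).coeff j * (j * spT F (pderiv 2 F))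
          + (spPhi F (pderiv 2 F) * Polynomial.X).coeff j * spD F := by
          linear_combination -hc
        rw [this]
        exact dvd_add (dvd_sub (Dvd.dvd.mul_right (hT _ ih) _) (Dvd.dvd.mul_right ih _))
          (Dvd.dvd.mul_left hD _)
      have h5 := (hF.dvd_or_dvd hdv).resolve_left hw
      rcases hF.dvd_or_dvd h5 with h6 | h6
      · exact h6
      · exfalso
        have h7 : ((j:MvPolynomial (Fin 3) K) + 1) = C (((j+1 : ℕ)) : K) := by simp
        rw [h7] at h6
        have h8 : (((j+1 : ℕ)) : K) ≠ 0 := by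
          intro h0
          rw [CharP.cast_eq_zero_iff K p] at h0
          have := Nat.le_of_dvd (Nat.succ_pos _) h0
          omega
        exact hF.not_isUnit (isUnit_of_dvd_unit h6 ((isUnit_iff_ne_zero.2 h8).map C))
  · rw [Polynomial.coeff_eq_zero_of_natDegree_lt (by omega)]
    exact dvd_zero _

theorem sp_tangent (p : ℕ) [CharP K p] (F : MvPolynomial (Fin 3) K) (hF : Prime F)
    (hd : F.totalDegree < p) (hw : ¬ F ∣ pderiv 2 F) (hD : F ∣ spD F) (x : Fin 3 → K)
    (hx : eval x F = 0) (t : K) :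
    eval ![x 0 + t * eval x (pderiv 2 F), x 1, x 2 - t * eval x (pderiv 0 F)] F = 0 := by
  have h0 : (spPhi F F).map (eval x) = 0 := by
    ext j
    obtain ⟨c, hc⟩ := spPhi_dvd p F hF hd hw hD j
    rw [Polynomial.coeff_map, hc, map_mul, hx]; simp
  have h1 : Polynomial.eval t ((spPhi F F).map (eval x)) = 0 := by rw [h0]; simp
  rw [← h1]
  have : ∀ G : MvPolynomial (Fin 3) K,
     eval ![x 0 + t * eval x (pderiv 2 F), x 1, x 2 - t * eval x (pderiv 0 F)] G
      = Polynomial.eval t ((spPhi F G).map (eval x)) := by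
    intro G
    induction G using MvPolynomial.induction_on with
    | C a => simp [spPhi, IsScalarTower.algebraMap_apply K (MvPolynomial (Fin 3) K) (Polynomial (MvPolynomial (Fin 3) K)), algebraMap_eq]
    | add p q hp hq => 
      simp only [spPhi, map_add, Polynomial.map_add, Polynomial.eval_add] at hp hq ⊢
      rw [hp, hq]
    | mul_X p i hp =>
      simp only [spPhi, map_mul, Polynomial.map_mul, Polynomial.eval_mul] at hp ⊢
      rw [hp]
      congr 1
      fin_cases i
      · simp; ring
      · simp
      · simp; ring
  exact this F

end SP


section SP
open MvPolynomial
variable {K : Type*} [Field K]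

def spH (P : Finset (K × K × K)) : Prop :=
  ∀ p ∈ P, ∀ p' ∈ P, p.1 = p'.1 → ∀ x, p.2.1 * x + p.2.2 = p'.2.1 * x + p'.2.2 → p = p'

open Classical in
theorem sp_cntQ (F : MvPolynomial (Fin 3) K) (P : Finset (K × K × K)) (hP : spH P)
    (q : K × K × K) (h : resM q F ≠ 0)
    (hz : ∀ p ∈ P, incid p q → (resL p F).eval q.1 = 0) :
    (P.filter (fun p => incid p q)).card ≤ F.totalDegree := by
  have h1 : (P.filter (fun p => incid p q)).card ≤ (resM q F).roots.toFinset.card := by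
    apply Finset.card_le_card_of_injOn (fun p => p.1)
    · intro p hp
      simp only [coe_filter, Set.mem_ofPred_eq] at hp
      simp only [mem_coe, Multiset.mem_toFinset]
      rw [Polynomial.mem_roots h, Polynomial.IsRoot, ← incid_eval p q hp.2 F]
      exact hz p hp.1 hp.2
    · intro p hp p' hp' he
      simp only [coe_filter, Set.mem_ofPred_eq] at hp hp'
      simp only at he
      refine hP p hp.1 p' hp'.1 he q.1 ?_
      have a := hp.2; have b := hp'.2
      rw [incid] at a b
      rw [a, b, he]
  exact h1.trans ((Multiset.toFinset_card_le _).trans ((Polynomial.card_roots' _).trans (natDegree_resM _ _)))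

open Classical in
theorem sp_cntP (F : MvPolynomial (Fin 3) K) (Q : Finset (K × K × K)) (hQ : spH Q)
    (p : K × K × K) (h : resL p F ≠ 0) :
    (Q.filter (fun q => incid p q ∧ (resL p F).eval q.1 = 0)).card ≤ F.totalDegree := by
  have h1 : (Q.filter (fun q => incid p q ∧ (resL p F).eval q.1 = 0)).card ≤ (resL p F).roots.toFinset.card := by
    apply Finset.card_le_card_of_injOn (fun p => p.1)
    · intro q hp
      simp only [coe_filter, Set.mem_ofPred_eq] at hp
      simp only [mem_coe, Multiset.mem_toFinset]
      rw [Polynomial.mem_roots h, Polynomial.IsRoot]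
      exact hp.2.2
    · intro q hp q' hp' he
      simp only [coe_filter, Set.mem_ofPred_eq] at hp hp'
      simp only at he
      refine hQ q hp.1 q' hp'.1 he p.1 ?_
      have a := hp.2.1; have b := hp'.2.1
      rw [incid] at a b
      rw [← a, ← b, he]
  exact h1.trans ((Multiset.toFinset_card_le _).trans ((Polynomial.card_roots' _).trans (natDegree_resL _ _)))

theorem sp_eval_aevalX1 (B : Polynomial K) (y : Fin 3 → K) :
    eval y (Polynomial.aeval (X 1 : MvPolynomial (Fin 3) K) B) = B.eval (y 1) := by
  induction B using Polynomial.induction_on' with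
  | add p q hp hq => simp [hp, hq]
  | monomial n a => simp [Polynomial.aeval_monomial, algebraMap_eq]

theorem sp_ruled [Infinite K] (p : ℕ) [CharP K p] (F : MvPolynomial (Fin 3) K) (hF : Prime F)
    (hd : F.totalDegree < p) (hw : ¬ F ∣ pderiv 2 F) (hD : F ∣ spD F) (q1 : K × K × K)
    (h1 : resM q1 F = 0) (h2 : resM q1 (pderiv 2 F) ≠ 0) :
    ∃ a b : K × K × K, a.1 ≠ b.1 ∧ ∀ q, resM q F = 0 → incid a q ∧ incid b q := by
  obtain ⟨u1, γ1, δ1⟩ := q1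
  set B := resM (u1, γ1, δ1) (pderiv 2 F) with hB
  set A := resM (u1, γ1, δ1) (pderiv 0 F) with hA
  let f : K → K × K × K := fun v => (v, -(A.eval v / B.eval v), (γ1 * v + δ1) + A.eval v / B.eval v * u1)
  have hinf : {v | B.eval v ≠ 0}.Infinite := by
    have : {v | B.eval v ≠ 0} = {v | B.IsRoot v}ᶜ := by ext; simp [Polynomial.IsRoot]
    rw [this]
    exact (Polynomial.finite_setOfPred_isRoot h2).infinite_compl
  have hfi : Function.Injective f := fun a b h => congrArg (fun z => z.1) h
  have hinfS : (f '' {v | B.eval v ≠ 0}).Infinite := hinf.image hfi.injOn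
  let G : MvPolynomial (Fin 3) K := Polynomial.aeval (X 1) B * (X 2 - C γ1 * X 1 - C δ1)
    + Polynomial.aeval (X 1) A * (X 0 - C u1)
  have hdvd : F ∣ G := by
    refine sp_bezout_inf F G hF (f '' {v | B.eval v ≠ 0}) hinfS ?_ ?_
    · rintro _ ⟨v, hv, rfl⟩
      apply Polynomial.funext
      intro x
      have hv' : B.eval v ≠ 0 := hv
      rw [eval_resL]
      have ht := sp_tangent p F hF hd hw hD ![u1, v, γ1 * v + δ1]
        (by have := eval_resM (u1, γ1, δ1) F v
            simp only at this
            rw [← this, h1]; simp) ((x - u1) / B.eval v)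
      have e1 := eval_resM (u1, γ1, δ1) (pderiv 2 F) v
      have e2 := eval_resM (u1, γ1, δ1) (pderiv 0 F) v
      simp only at e1 e2
      rw [← e1, ← e2, ← hA, ← hB] at ht
      simp only [Polynomial.eval_zero]
      rw [← ht]
      congr 2
      ext i
      fin_cases i
      · simp [f, hv']
      · simp [f]
      · simp [f]; field_simp; ring
    · rintro _ ⟨v, hv, rfl⟩
      have hv' : B.eval v ≠ 0 := hv
      apply Polynomial.funext
      intro x
      rw [eval_resL]
      simp [G, f, sp_eval_aevalX1]
      field_simp
      ring
  have key : ∀ v, B.eval v ≠ 0 → ∀ q, resM q F = 0 → incid (f v) q := by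
    intro v hv q hq
    have hG : resM q G = 0 := by
      obtain ⟨c, hc⟩ := hdvd
      rw [hc, map_mul, hq, zero_mul]
    have := eval_resM q G v
    rw [hG] at this
    simp [G, sp_eval_aevalX1] at this
    rw [incid]
    simp only [f]
    field_simp
    linear_combination this
  obtain ⟨a, ha, b, hb, hab⟩ := hinf.nontrivial
  exact ⟨f a, f b, fun h => hab h, fun q hq => ⟨key a ha q hq, key b hb q hq⟩⟩

theorem sp_cyl [Infinite K] (F : MvPolynomial (Fin 3) K) (hF : Prime F)
    (hv : (2 : Fin 3) ∉ F.vars) (p : K × K × K) (hp : resL p F = 0) (q : K × K × K) :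
    resM q F ≠ 0 := by
  intro hq
  have hdvd : F ∣ X 1 - C p.1 := by
    refine sp_bezout_inf F _ hF (Set.range (fun b : K => ((p.1, 0, b) : K × K × K))) ?_ ?_ ?_
    · exact Set.infinite_range_of_injective (fun a b h => by simpa using h)
    · rintro _ ⟨b, rfl⟩
      apply Polynomial.funext
      intro x
      rw [eval_resL]
      have h0 := eval_resL p F x
      rw [hp] at h0
      rw [h0]
      simp only
      refine eval₂Hom_congr' rfl ?_ rfl
      intro i hi _
      fin_cases i
      · rfl
      · rfl
      · exact absurd hi hv
    · rintro _ ⟨b, rfl⟩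
      apply Polynomial.funext
      intro x
      rw [eval_resL]
      simp
  obtain ⟨c, hc⟩ := hdvd
  have h2 : resM q (X 1 - C p.1) = 0 := by rw [hc, map_mul, hq, zero_mul]
  have h3 := eval_resM q (X 1 - C p.1) (p.1 + 1)
  rw [h2] at h3
  simp at h3

end SP


section SP
open MvPolynomial
variable {K : Type*} [Field K]

open Classical in
noncomputable def spI (P Q : Finset (K × K × K)) : ℕ :=
  ∑ p ∈ P, (Q.filter (fun q => incid p q)).card

open Classical in
theorem spI_comm (P Q : Finset (K × K × K)) :
    spI P Q = ∑ q ∈ Q, (P.filter (fun p => incid p q)).card :=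
  Finset.sum_card_bipartiteAbove_eq_sum_card_bipartiteBelow _

open Classical in
theorem spI_union_left (P P' Q : Finset (K × K × K)) : spI (P ∪ P') Q ≤ spI P Q + spI P' Q := by
  simp only [spI]
  have := Finset.sum_union_inter (s₁ := P) (s₂ := P') (f := fun p => (Q.filter (fun q => incid p q)).card)
  omega

open Classical in
theorem spI_union_right (P Q Q' : Finset (K × K × K)) : spI P (Q ∪ Q') ≤ spI P Q + spI P Q' := by
  simp only [spI_comm]
  have := Finset.sum_union_inter (s₁ := Q) (s₂ := Q') (f := fun q => (P.filter (fun p => incid p q)).card)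
  omega

open Classical in
theorem spI_le_P (P Q : Finset (K × K × K)) (m : ℕ)
    (h : ∀ p ∈ P, (Q.filter (fun q => incid p q)).card ≤ m) : spI P Q ≤ m * P.card := by
  have := Finset.sum_le_card_nsmul P _ m h
  rw [smul_eq_mul, mul_comm] at this
  exact this

open Classical in
theorem spI_le_Q (P Q : Finset (K × K × K)) (m : ℕ)
    (h : ∀ q ∈ Q, (P.filter (fun p => incid p q)).card ≤ m) : spI P Q ≤ m * Q.card := by
  rw [spI_comm]
  have := Finset.sum_le_card_nsmul Q _ m h
  rw [smul_eq_mul, mul_comm] at this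
  exact this

theorem spH.mono {P P' : Finset (K × K × K)} (h : spH P) (hs : P' ⊆ P) : spH P' :=
  fun p hp p' hp' => h p (hs hp) p' (hs hp')

open Classical in
def spK (Q : Finset (K × K × K)) (k : ℕ) : Prop :=
  ∀ a b : K × K × K, a.1 ≠ b.1 → (Q.filter (fun q => incid a q ∧ incid b q)).card ≤ k

theorem spK.mono {Q Q' : Finset (K × K × K)} {k : ℕ} (h : spK Q k) (hs : Q' ⊆ Q) : spK Q' k :=
  by
  classical
  exact fun a b hab => (Finset.card_le_card (Finset.filter_subset_filter _ hs)).trans (h a b hab)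

theorem spD_deg (F : MvPolynomial (Fin 3) K) : (spD F).totalDegree ≤ 3 * F.totalDegree := by
  have h := fun i G => sp_totalDegree_pderiv_le (K := K) i G
  have hm : ∀ a b c d : MvPolynomial (Fin 3) K, ∀ n m, a.totalDegree ≤ n → c.totalDegree ≤ n →
     b.totalDegree ≤ m → d.totalDegree ≤ m → (a * b - c * d).totalDegree ≤ n + m := by
    intro a b c d n m h1 h2 h3 h4
    refine (totalDegree_sub _ _).trans (max_le ?_ ?_)
    · exact (totalDegree_mul _ _).trans (by omega)
    · exact (totalDegree_mul _ _).trans (by omega)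
  have hT : ∀ i, (spT F (pderiv i F)).totalDegree ≤ F.totalDegree + F.totalDegree := by
    intro i
    rw [spT_apply]
    exact hm _ _ _ _ _ _ (h _ _) (h _ _) ((h _ _).trans (h _ _)) ((h _ _).trans (h _ _))
  have := hm _ _ _ _ _ _ (h 2 F) (h 0 F) (hT 0) (hT 2)
  rw [spD]; omega

theorem resL_derivative (p : K × K × K) (G : MvPolynomial (Fin 3) K) :
    Polynomial.derivative (resL p G) = resL p (pderiv 0 G) + Polynomial.C p.2.1 * resL p (pderiv 2 G) := by
  have h := sp_chain (K := K)
    (D := (Polynomial.derivative (R := K)).toAddMonoidHom)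
    (by intro a b; simp only [LinearMap.toAddMonoidHom_coe, Polynomial.derivative_mul]; ring)
    (by intro k; simp)
    ![Polynomial.X, Polynomial.C p.1, Polynomial.C p.2.1 * Polynomial.X + Polynomial.C p.2.2] G
  simp only [Fin.sum_univ_three] at h
  simp only [resL]
  refine h.trans ?_
  simp
  ring

theorem sp_flec (F : MvPolynomial (Fin 3) K) (p : K × K × K) (h : resL p F = 0) :
    resL p (spD F) = 0 := by
  have h1 := resL_derivative p F
  rw [h] at h1
  have h2 := congrArg Polynomial.derivative h1
  simp only [Polynomial.derivative_zero, Polynomial.derivative_add, Polynomial.derivative_mul,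
    Polynomial.derivative_C, resL_derivative] at h1 h2
  simp only [spD, spT_apply, map_sub, map_mul]
  have h3 : resL p (pderiv 0 F) = - (Polynomial.C p.2.1 * resL p (pderiv 2 F)) := by
    linear_combination -h1
  rw [h3]
  linear_combination -(resL p (pderiv 2 F))^2 * h2

theorem sp_lemma5 [Infinite K] (p : ℕ) [CharP K p] (F : MvPolynomial (Fin 3) K) (hF : Prime F)
    (hd : F.totalDegree < p) (k : ℕ) (P Q : Finset (K × K × K)) (hP : spH P) (hQ : spH Q)
    (hk : spK Q k) (hPF : ∀ p ∈ P, resL p F = 0) :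
    ∃ P' ⊆ P, P'.card ≤ 3 * F.totalDegree ^ 2 ∧
      spI P Q ≤ F.totalDegree * Q.card + (F.totalDegree + k) * P.card + spI P' Q := by
  classical
  have hcq : ∀ P1 ⊆ P, ∀ q, resM q F ≠ 0 → (P1.filter (fun p => incid p q)).card ≤ F.totalDegree := by
    intro P1 h1 q hq
    refine sp_cntQ F P1 (hP.mono h1) q hq ?_
    intro p hp _
    rw [hPF p (h1 hp)]; simp
  by_cases hw0 : pderiv 2 F = 0
  · refine ⟨∅, by simp, by simp, ?_⟩
    have hv := sp_not_mem_vars p 2 F hd hw0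
    rcases P.eq_empty_or_nonempty with rfl | ⟨p0, hp0⟩
    · simp [spI]
    · have := spI_le_Q P Q F.totalDegree (fun q _ => hcq P (le_refl _) q (sp_cyl F hF hv p0 (hPF p0 hp0) q))
      nlinarith [Nat.zero_le ((F.totalDegree + k) * P.card)]
  · have hw : ¬ F ∣ pderiv 2 F := by
      rintro ⟨c, hc⟩
      have hc0 : c ≠ 0 := by rintro rfl; simp at hc; exact hw0 hc
      have h1 := sp_totalDegree_pderiv 2 F hw0
      rw [hc, totalDegree_mul_of_isDomain hF.ne_zero hc0] at h1
      omega
    by_cases hD : F ∣ spD F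
    · let P' := P.filter (fun p => resL p (pderiv 2 F) = 0)
      let P'' := P.filter (fun p => ¬ resL p (pderiv 2 F) = 0)
      let Q0 := Q.filter (fun q => resM q F = 0)
      let Q1 := Q.filter (fun q => ¬ resM q F = 0)
      have hsP : spI P Q = spI P' Q + spI P'' Q :=
        (Finset.sum_filter_add_sum_filter_not P _ _).symm
      have hsQ : spI P'' Q = spI P'' Q0 + spI P'' Q1 := by
        rw [spI_comm, spI_comm, spI_comm]
        exact (Finset.sum_filter_add_sum_filter_not Q _ _).symm
      have hdw : (pderiv 2 F).totalDegree ≤ F.totalDegree := sp_totalDegree_pderiv_le 2 F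
      refine ⟨P', filter_subset _ _, ?_, ?_⟩
      · have := sp_bezout F (pderiv 2 F) hF hw P' (fun p hp => hPF p (mem_filter.1 hp).1)
          (fun p hp => (mem_filter.1 hp).2)
        nlinarith
      · have h1 : spI P'' Q1 ≤ F.totalDegree * Q1.card :=
          spI_le_Q _ _ _ (fun q hq => hcq P'' (filter_subset _ _) q (mem_filter.1 hq).2)
        have hQ1 : Q1.card ≤ Q.card := card_le_card (filter_subset _ _)
        have hP2 : P''.card ≤ P.card := card_le_card (filter_subset _ _)
        have h3 : (Q0.filter (fun q => resM q (pderiv 2 F) ≠ 0)).card ≤ k := by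
          rcases (Q0.filter (fun q => resM q (pderiv 2 F) ≠ 0)).eq_empty_or_nonempty with h | ⟨q1, hq1⟩
          · rw [h]; simp
          · rw [mem_filter] at hq1
            obtain ⟨a, b, hab, hq⟩ := sp_ruled p F hF hd hw hD q1 (mem_filter.1 hq1.1).2 hq1.2
            refine le_trans (card_le_card ?_) (hk a b hab)
            intro q hqq
            have h5 := (mem_filter.1 (mem_filter.1 hqq).1)
            exact mem_filter.2 ⟨h5.1, hq q h5.2⟩
        have h2 : spI P'' Q0 ≤ (F.totalDegree + k) * P''.card := by
          apply spI_le_P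
          intro p hp
          have hp2 := (mem_filter.1 hp).2
          have ha := (sp_cntP (pderiv 2 F) Q0 (hQ.mono (filter_subset _ _)) p hp2).trans hdw
          have hsub : Q0.filter (fun q => incid p q) ⊆
            Q0.filter (fun q => incid p q ∧ (resL p (pderiv 2 F)).eval q.1 = 0) ∪
            Q0.filter (fun q => resM q (pderiv 2 F) ≠ 0) := by
            intro q hq
            replace hq := mem_filter.1 hq
            refine mem_union.2 ?_
            by_cases h0 : (resL p (pderiv 2 F)).eval q.1 = 0
            · exact Or.inl (mem_filter.2 ⟨hq.1, hq.2, h0⟩)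
            · refine Or.inr (mem_filter.2 ⟨hq.1, fun h => h0 ?_⟩)
              rw [incid_eval p q hq.2, h]; simp
          refine (card_le_card hsub).trans ((card_union_le _ _).trans (by omega))
        have h4 := Nat.mul_le_mul_left (F.totalDegree + k) hP2
        have h5 := Nat.mul_le_mul_left (F.totalDegree) hQ1
        omega
    · refine ⟨P, le_refl _, ?_, by omega⟩
      have := sp_bezout F (spD F) hF hD P hPF (fun p hp => sp_flec F p (hPF p hp))
      have h2 := spD_deg F
      have := this.trans (Nat.mul_le_mul_left _ h2)
      nlinarith

end SP


section SP
open MvPolynomial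
variable {K : Type*} [Field K]

theorem spI_disj [DecidableEq K] (P P' Q : Finset (K × K × K)) (h : Disjoint P P') :
    spI (P ∪ P') Q = spI P Q + spI P' Q := Finset.sum_union h

theorem sp_lemma6 [Infinite K] (p : ℕ) [CharP K p] (F : MvPolynomial (Fin 3) K) (k : ℕ)
    (Q : Finset (K × K × K)) (hQ : spH Q) (hk : spK Q k) :
    F ≠ 0 → F.totalDegree < p → ∀ P : Finset (K × K × K), spH P → (∀ p ∈ P, resL p F = 0) →
    ∃ P' ⊆ P, P'.card ≤ 3 * F.totalDegree ^ 2 ∧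
      spI P Q ≤ F.totalDegree * Q.card + (F.totalDegree + k) * P.card + spI P' Q := by
  classical
  induction F using UniqueFactorizationMonoid.induction_on_prime with
  | h₁ => intro h; exact absurd rfl h
  | h₂ x hx =>
    intro _ _ P _ hPF
    have : P = ∅ := by
      rw [Finset.eq_empty_iff_forall_notMem]
      intro q hq
      have h1 := hx.map (resL q)
      rw [hPF q hq] at h1
      exact not_isUnit_zero h1
    subst this
    exact ⟨∅, by simp, by simp, by simp [spI]⟩
  | h₃ a π ha hπ ih =>
    intro h0 hd P hP hPF
    have hdeg := totalDegree_mul_of_isDomain hπ.ne_zero ha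
    rw [hdeg] at hd
    rw [hdeg]
    let P1 := P.filter (fun p => resL p π = 0)
    let P2 := P.filter (fun p => ¬ resL p π = 0)
    have hsP : spI P Q = spI P1 Q + spI P2 Q :=
        (Finset.sum_filter_add_sum_filter_not P _ _).symm
    have hcP : P1.card + P2.card = P.card := Finset.card_filter_add_card_filter_not _
    obtain ⟨P1', hs1, hc1, hI1⟩ := sp_lemma5 p π hπ (by omega) k P1 Q (hP.mono (filter_subset _ _)) hQ hk
      (fun p hp => (mem_filter.1 hp).2)
    obtain ⟨P2', hs2, hc2, hI2⟩ := ih ha (by omega) P2 (hP.mono (filter_subset _ _))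
      (fun p hp => by
        have h1 := hPF p (mem_filter.1 hp).1
        rw [map_mul] at h1
        exact (mul_eq_zero.1 h1).resolve_left (mem_filter.1 hp).2)
    have hdis : Disjoint P1' P2' :=
      Finset.disjoint_of_subset_left hs1 (Finset.disjoint_of_subset_right hs2
        (Finset.disjoint_filter_filter_not _ _ _))
    refine ⟨P1' ∪ P2', ?_, ?_, ?_⟩
    · exact union_subset (hs1.trans (filter_subset _ _)) (hs2.trans (filter_subset _ _))
    · refine (card_union_le _ _).trans ?_
      nlinarith [Nat.zero_le (π.totalDegree * a.totalDegree)]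
    · rw [spI_disj _ _ _ hdis, hsP, ← hcP]
      nlinarith [Nat.zero_le (π.totalDegree * P2.card), Nat.zero_le (a.totalDegree * P1.card)]

theorem sp_lemma7a [Infinite K] (p : ℕ) [CharP K p] (k D : ℕ) (P Q : Finset (K × K × K))
    (hP : spH P) (hQ : spH Q) (hk : spK Q k) (hD : D < p) (hQD : 6 * Q.card < (D+2)*(D+3)) :
    ∃ P' ⊆ P, P'.card ≤ 3 * D ^ 2 ∧
      spI P Q ≤ D * Q.card + (2 * D + k) * P.card + spI P' Q := by
  classical
  obtain ⟨F, hF0, hFD, hFQ⟩ := sp_interp Q D hQD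
  let P1 := P.filter (fun p => resL p F = 0)
  let P2 := P.filter (fun p => ¬ resL p F = 0)
  have hsP : spI P Q = spI P1 Q + spI P2 Q :=
        (Finset.sum_filter_add_sum_filter_not P _ _).symm
  have hcP : P1.card + P2.card = P.card := Finset.card_filter_add_card_filter_not _
  obtain ⟨P', hs1, hc1, hI1⟩ := sp_lemma6 p F k Q hQ hk hF0 (by omega) P1 (hP.mono (filter_subset _ _)) 
      (fun p hp => (mem_filter.1 hp).2)
  refine ⟨P', hs1.trans (filter_subset _ _), hc1.trans ?_, ?_⟩
  · have := Nat.pow_le_pow_left hFD 2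
    omega
  · have h2 : spI P2 Q ≤ D * P2.card := by
      apply spI_le_P
      intro p hp
      refine le_trans (card_le_card ?_) ((sp_cntP F Q hQ p (mem_filter.1 hp).2).trans hFD)
      intro q hq
      replace hq := mem_filter.1 hq
      refine mem_filter.2 ⟨hq.1, hq.2, ?_⟩
      rw [incid_eval p q hq.2, hFQ q hq.1]; simp
    have h3 : F.totalDegree * Q.card ≤ D * Q.card := Nat.mul_le_mul_right _ hFD
    have h4 : (F.totalDegree + k) * P1.card ≤ (D + k) * P1.card := Nat.mul_le_mul_right _ (by omega)
    rw [hsP, ← hcP]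
    nlinarith [Nat.zero_le (D * P2.card), Nat.zero_le (D * P1.card), Nat.zero_le (k * P2.card)]

theorem sp_split (Q : Finset (K × K × K)) (a : ℕ) (h : Q.card ≤ 2 * a) :
    ∃ Q1 Q2 : Finset (K × K × K), Q1 ⊆ Q ∧ Q2 ⊆ Q ∧ Q1.card ≤ a ∧ Q2.card ≤ a ∧
      (∀ P, spI P Q ≤ spI P Q1 + spI P Q2) ∧ (∀ P, spI Q P ≤ spI Q1 P + spI Q2 P) := by
  classical
  obtain ⟨Q1, h1, h2⟩ := Finset.exists_subset_card_eq (s := Q) (n := min Q.card a) (min_le_left _ _)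
  have h3 := Finset.card_sdiff_add_card_eq_card h1
  refine ⟨Q1, Q \ Q1, h1, sdiff_subset, by omega, by omega, ?_, ?_⟩
  · intro P
    have := spI_union_right P Q1 (Q \ Q1)
    rwa [Finset.union_sdiff_of_subset h1] at this
  · intro P
    have := spI_union_left Q1 (Q \ Q1) P
    rwa [Finset.union_sdiff_of_subset h1] at this

theorem sp_lemma7 [Infinite K] (p : ℕ) [CharP K p] (k D : ℕ) (hD1 : 1 ≤ D) (hD : D < p) (n : ℕ)
    (hn : 6 * 2 ^ n < (D + 1) ^ 2) : ∀ (P Q : Finset (K × K × K)),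
    spH P → spH Q → spK Q k → P.card ≤ 18 * 2 ^ n → Q.card ≤ 2 ^ n →
    spI P Q ≤ (n + 1) * 2 ^ n * (73 * D + 36 * k) := by
  classical
  induction n with
  | zero =>
    intro P Q hP hQ hk hPc hQc
    have : spI P Q ≤ Q.card * P.card := spI_le_P _ _ _ (fun p _ => card_le_card (filter_subset _ _))
    have h2 : Q.card * P.card ≤ 1 * 18 := Nat.mul_le_mul (by simpa using hQc) (by simpa using hPc)
    simp
    omega
  | succ n ih =>
    intro P Q hP hQ hk hPc hQc
    have hn' : 6 * 2 ^ n < (D + 1) ^ 2 := by rw [pow_succ] at hn; omega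
    have ih := ih hn'
    set t := 2 ^ n with ht
    have ht2 : 2 ^ (n+1) = 2 * t := by rw [pow_succ]; omega
    rw [ht2] at hPc hQc ⊢
    obtain ⟨Q1, Q2, hs1, hs2, hc1, hc2, hI, -⟩ := sp_split Q t hQc
    have hsq1 : Nat.sqrt (6 * t) ^ 2 ≤ 6 * t := by rw [sq]; exact Nat.sqrt_le _
    have hsq2 : 6 * t < (Nat.sqrt (6 * t) + 1) ^ 2 := by rw [sq]; exact Nat.lt_succ_sqrt _
    have hsq3 : Nat.sqrt (6 * t) ≤ D := by
      by_contra h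
      push Not at h
      have := Nat.pow_le_pow_left h 2
      simp only [Nat.succ_eq_add_one] at this
      omega
    set E := Nat.sqrt (6 * t)
    have key : ∀ Q' ⊆ Q, Q'.card ≤ t → spI P Q' ≤ (n + 2) * t * (73 * D + 36 * k) := by
      intro Q' hs hc
      obtain ⟨P', hsP, hcP, hI⟩ := sp_lemma7a p k E P Q' hP (hQ.mono hs) (hk.mono hs) (by omega)
        (by nlinarith)
      have h1 := ih P' Q' (hP.mono hsP) (hQ.mono hs) (hk.mono hs) (by omega) hc
      have h2 : E * Q'.card ≤ D * t := Nat.mul_le_mul hsq3 hc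
      have h3 : (2 * E + k) * P.card ≤ (2 * D + k) * (18 * (2 * t)) := Nat.mul_le_mul (by omega) hPc
      calc spI P Q' ≤ D * t + (2 * D + k) * (18 * (2 * t)) + (n + 1) * t * (73 * D + 36 * k) := by omega
        _ = _ := by ring
    have h1 := key Q1 hs1 hc1
    have h2 := key Q2 hs2 hc2
    have h3 := hI P
    calc spI P Q ≤ 2 * ((n + 2) * t * (73 * D + 36 * k)) := by omega
      _ = _ := by ring

theorem sp_lemma8 (k n0 B : ℕ)
    (h0 : ∀ (P Q : Finset (K × K × K)), spH P → spH Q → spK Q k → P.card ≤ 2 ^ n0 →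
      Q.card ≤ 2 ^ n0 → spI P Q ≤ B) (j : ℕ) :
    ∀ (P Q : Finset (K × K × K)), spH P → spH Q → spK Q k → P.card ≤ 2 ^ (n0 + j) →
      Q.card ≤ 2 ^ (n0 + j) → spI P Q ≤ 4 ^ j * B := by
  induction j with
  | zero => simpa using h0
  | succ j ih =>
    intro P Q hP hQ hk hPc hQc
    obtain ⟨P1, P2, hp1, hp2, hpc1, hpc2, -, hIP⟩ := sp_split P (2 ^ (n0 + j)) (by rw [← add_assoc, pow_succ] at hPc; omega)
    obtain ⟨Q1, Q2, hq1, hq2, hqc1, hqc2, hIQ, -⟩ := sp_split Q (2 ^ (n0 + j)) (by rw [← add_assoc, pow_succ] at hQc; omega)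
    have a := hIP Q
    have b := hIQ P1
    have c := hIQ P2
    have d1 := ih P1 Q1 (hP.mono hp1) (hQ.mono hq1) (hk.mono hq1) hpc1 hqc1
    have d2 := ih P1 Q2 (hP.mono hp1) (hQ.mono hq2) (hk.mono hq2) hpc1 hqc2
    have d3 := ih P2 Q1 (hP.mono hp2) (hQ.mono hq1) (hk.mono hq1) hpc2 hqc1
    have d4 := ih P2 Q2 (hP.mono hp2) (hQ.mono hq2) (hk.mono hq2) hpc2 hqc2
    rw [pow_succ]
    calc spI P Q ≤ 4 * (4 ^ j * B) := by omega
      _ = _ := by ring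

theorem sp_small [Infinite K] (p : ℕ) [CharP K p] (k n : ℕ) (P Q : Finset (K × K × K))
    (hP : spH P) (hQ : spH Q) (hk : spK Q k) (hPc : P.card ≤ 2 ^ n) (hQc : Q.card ≤ 2 ^ n)
    (hn : 6 * 2 ^ n < p ^ 2) :
    spI P Q ≤ (n + 1) * 2 ^ n * (73 * Nat.sqrt (6 * 2 ^ n) + 36 * k) := by
  have hsq1 : Nat.sqrt (6 * 2 ^ n) ^ 2 ≤ 6 * 2 ^ n := by rw [sq]; exact Nat.sqrt_le _
  have hsq2 : 6 * 2 ^ n < (Nat.sqrt (6 * 2 ^ n) + 1) ^ 2 := by rw [sq]; exact Nat.lt_succ_sqrt _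
  refine sp_lemma7 p k _ ?_ ?_ n hsq2 P Q hP hQ hk (by omega) hQc
  · rw [Nat.one_le_iff_ne_zero, Ne, Nat.sqrt_eq_zero]
    have := Nat.two_pow_pos n
    omega
  · exact lt_of_pow_lt_pow_left₀ 2 (by omega) (by omega)

theorem sp_large [Infinite K] (p : ℕ) (hp : 3 ≤ p) [CharP K p] (k n : ℕ) (P Q : Finset (K × K × K))
    (hP : spH P) (hQ : spH Q) (hk : spK Q k) (hPc : P.card ≤ 2 ^ n) (hQc : Q.card ≤ 2 ^ n)
    (hn : p ^ 2 ≤ 6 * 2 ^ n) (hkp : k ≤ p) :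
    p * spI P Q ≤ 1308 * (n + 1) * 4 ^ n := by
  have hex : ∃ m, p ^ 2 ≤ 6 * 2 ^ m := ⟨n, hn⟩
  classical
  obtain ⟨n0, hn0⟩ : ∃ n0, Nat.find hex = n0 + 1 := by
    refine Nat.exists_eq_succ_of_ne_zero ?_
    intro h
    have := Nat.find_spec hex
    rw [h] at this
    have := Nat.pow_le_pow_left hp 2
    omega
  have h1 := Nat.find_spec hex
  have h2 := Nat.find_min hex (m := n0) (by omega)
  have h3 := Nat.find_min' hex hn
  rw [hn0] at h1 h3
  push Not at h2
  obtain ⟨j, rfl⟩ : ∃ j, n = n0 + j := ⟨n - n0, by omega⟩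
  have hs := sp_lemma8 (K := K) k n0 ((n0 + 1) * 2 ^ n0 * (109 * p)) (by
    intro P Q hP hQ hk hPc hQc
    refine (sp_small p k n0 P Q hP hQ hk hPc hQc h2).trans (Nat.mul_le_mul_left _ ?_)
    have : Nat.sqrt (6 * 2 ^ n0) < p := by rw [Nat.sqrt_lt']; exact h2
    omega) j P Q hP hQ hk hPc hQc
  calc p * spI P Q ≤ p * (4 ^ j * ((n0 + 1) * 2 ^ n0 * (109 * p))) := Nat.mul_le_mul_left _ hs
    _ = 4 ^ j * (n0 + 1) * 2 ^ n0 * 109 * p ^ 2 := by ring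
    _ ≤ 4 ^ j * (n0 + 1) * 2 ^ n0 * 109 * (6 * 2 ^ (n0 + 1)) := Nat.mul_le_mul_left _ h1
    _ = 1308 * (n0 + 1) * (4 ^ j * (2 ^ n0 * 2 ^ n0)) := by ring
    _ = 1308 * (n0 + 1) * 4 ^ (n0 + j) := by rw [← mul_pow, pow_add]; norm_num; ring
    _ ≤ _ := by gcongr; omega

end SP


section SP
open scoped Pointwise

theorem sp_pair {k K : Type*} [Field k] [Field K] (ι : k →+* K) (θ : K) (hθ : θ ∉ Set.range ι)
    {a b c d : k} (h : ι a + θ * ι b = ι c + θ * ι d) : a = c ∧ b = d := by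
  have hb : b = d := by
    by_contra hne
    have h1 : ι (b - d) ≠ 0 := by
      rw [Ne, map_eq_zero]; exact sub_ne_zero.2 hne
    apply hθ
    refine ⟨(c - a) / (b - d), ?_⟩
    rw [map_div₀, div_eq_iff h1, map_sub, map_sub]
    linear_combination -h
  subst hb
  refine ⟨ι.injective ?_, rfl⟩
  linear_combination h

theorem sp_app (p : ℕ) [Fact p.Prime] (hp : 3 ≤ p) (A : Finset (ZMod p)) (hA0 : (0 : ZMod p) ∉ A) :
    ∃ I : ℕ, A.card ^ 6 ≤ (A * A).card * I ∧ ∀ n, A.card ^ 2 * (A + A).card ≤ 2 ^ n →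
      (6 * 2 ^ n < p ^ 2 → I ≤ (n + 1) * 2 ^ n * (73 * Nat.sqrt (6 * 2 ^ n) + 36 * (A + A).card)) ∧
      (p ^ 2 ≤ 6 * 2 ^ n → p * I ≤ 1308 * (n + 1) * 4 ^ n) := by
  classical
  let K := AlgebraicClosure (ZMod p)
  let ι : ZMod p →+* K := algebraMap (ZMod p) K
  haveI : CharP K p := charP_of_injective_algebraMap ι.injective p
  haveI : Infinite K := inferInstance
  obtain ⟨θ, hθ⟩ : ∃ θ : K, θ ∉ Set.range ι := (Set.finite_range ι).exists_notMem
  have hι : Function.Injective ι := ι.injective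
  let S := A + A
  let g : ZMod p × ZMod p × ZMod p → K × K × K :=
    fun z => (ι z.2.1 + θ * ι z.1, ι z.1, ι (z.2.2 * z.2.1))
  let T : Finset (K × K × K) := (S ×ˢ A ×ˢ A).image g
  have hTm : ∀ q ∈ T, ∃ s ∈ S, ∃ b ∈ A, ∃ e ∈ A, q = (ι b + θ * ι s, ι s, ι (e * b)) := by
    intro q hq
    obtain ⟨⟨s, b, e⟩, hz, rfl⟩ := mem_image.1 hq
    simp only [mem_product] at hz
    exact ⟨s, hz.1, b, hz.2.1, e, hz.2.2, rfl⟩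
  have hAS : A.card ≤ S.card := by
    rcases A.eq_empty_or_nonempty with h | h
    · simp [h]
    · exact Finset.card_le_card_add_right h
  have hH : spH T := by
    intro q hq q' hq' h1 x hx
    obtain ⟨s, hs, b, hb, e, he, rfl⟩ := hTm q hq
    obtain ⟨s', hs', b', hb', e', he', rfl⟩ := hTm q' hq'
    obtain ⟨rfl, rfl⟩ := sp_pair ι θ hθ h1
    simp only at hx
    rw [add_left_cancel hx]
  have hKK : spK T S.card := by
    rintro ⟨v1, α1, β1⟩ ⟨v2, α2, β2⟩ hv
    simp only at hv
    have hinj : ∀ q q' : K × K × K, incid (v1, α1, β1) q → incid (v1, α1, β1) q' → q.1 = q'.1 → q.2.1 = q'.2.1 → q = q' := by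
      rintro ⟨u, γ, δ⟩ ⟨u', γ', δ'⟩ h1 h2 h3 h4
      simp only at h3 h4
      subst h3 h4
      simp only [incid] at h1 h2
      have : δ = δ' := by linear_combination h2 - h1
      rw [this]
    have hv' : v1 - v2 ≠ 0 := sub_ne_zero.2 hv
    by_cases hα : α1 = α2
    · subst hα
      refine le_trans ?_ ((card_image_le (s := A) (f := fun b => ι b + θ * ((β1 - β2) / (v1 - v2)))).trans hAS)
      apply Finset.card_le_card_of_injOn (fun q => q.1)
      · intro q hq
        obtain ⟨hq, h1, h2⟩ := mem_filter.1 (mem_coe.1 hq)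
        obtain ⟨s, hs, b, hb, e, he, rfl⟩ := hTm q hq
        simp only [incid] at h1 h2
        refine mem_coe.2 (mem_image.2 ⟨b, hb, ?_⟩)
        simp only
        congr 2
        rw [div_eq_iff hv']
        linear_combination h1 - h2
      · intro q hq q' hq' h
        obtain ⟨hq, h1, h2⟩ := mem_filter.1 (mem_coe.1 hq)
        obtain ⟨hq', h1', h2'⟩ := mem_filter.1 (mem_coe.1 hq')
        simp only at h
        refine hinj q q' h1 h1' h ?_
        simp only [incid] at h1 h2 h1' h2'
        apply mul_right_cancel₀ hv'
        linear_combination h2 - h1 + h1' - h2'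
    · refine le_trans ?_ ((card_image_le (s := S) (f := ι)))
      apply Finset.card_le_card_of_injOn (fun q => q.2.1)
      · intro q hq
        obtain ⟨hq, h1, h2⟩ := mem_filter.1 (mem_coe.1 hq)
        obtain ⟨s, hs, b, hb, e, he, rfl⟩ := hTm q hq
        exact mem_coe.2 (mem_image.2 ⟨s, hs, rfl⟩)
      · intro q hq q' hq' h
        obtain ⟨hq, h1, h2⟩ := mem_filter.1 (mem_coe.1 hq)
        obtain ⟨hq', h1', h2'⟩ := mem_filter.1 (mem_coe.1 hq')
        simp only at h
        refine hinj q q' h1 h1' ?_ h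
        simp only [incid] at h1 h2 h1' h2'
        apply mul_left_cancel₀ (sub_ne_zero.2 hα)
        rw [h] at h1 h2
        linear_combination h1 - h2 - h1' + h2'
  have hTc : T.card ≤ A.card ^ 2 * S.card := by
    refine card_image_le.trans ?_
    rw [card_product, card_product]
    apply le_of_eq; ring
  have hSp : S.card ≤ p := by
    have := Finset.card_le_univ S
    rwa [ZMod.card] at this
  have hlow : A.card ^ 2 * mulEnergy A A ≤ spI T T := by
    have hsI : spI T T = (T.sigma (fun q => T.filter (fun q' => incid q q'))).card := by
      rw [card_sigma]; rfl
    have hE : A.card ^ 2 * mulEnergy A A = ((((A ×ˢ A) ×ˢ A ×ˢ A).filter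
      (fun x : (ZMod p × ZMod p) × ZMod p × ZMod p => x.1.1 * x.2.1 = x.1.2 * x.2.2)) ×ˢ (A ×ˢ A)).card := by
      rw [card_product, card_product, mulEnergy]; ring
    rw [hsI, hE]
    apply Finset.card_le_card_of_injOn (fun z => 
      (⟨g (z.1.2.1 + z.2.1, z.1.1.2, z.2.2), g (z.1.2.2 + z.2.2, z.1.1.1, z.2.1)⟩ : (_ : K × K × K) × (K × K × K)))
    · rintro ⟨⟨⟨b, b'⟩, x, x'⟩, e, e'⟩ hz
      simp only [mem_coe, mem_product, mem_filter] at hz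
      obtain ⟨⟨⟨⟨hb, hb'⟩, hx, hx'⟩, heq⟩, he, he'⟩ := hz
      simp only [mem_coe, mem_sigma, mem_filter]
      have hm : ∀ s ∈ S, ∀ b ∈ A, ∀ e ∈ A, g (s, b, e) ∈ T := by
        intro s hs b hb e he
        exact mem_image_of_mem g (by simp only [mem_product]; exact ⟨hs, hb, he⟩)
      refine ⟨hm _ (add_mem_add hx he) _ hb' _ he', hm _ (add_mem_add hx' he') _ hb _ he, ?_⟩
      simp only [incid, g]
      have h2 := congrArg ι heq
      simp only [map_mul, map_add] at h2 ⊢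
      linear_combination h2
    · rintro ⟨⟨⟨b, b'⟩, x, x'⟩, e, e'⟩ hz ⟨⟨⟨c, c'⟩, y, y'⟩, f, f'⟩ hw h
      simp only [mem_coe, mem_product, mem_filter] at hz hw
      obtain ⟨⟨⟨⟨hb, hb'⟩, hx, hx'⟩, heq⟩, he, he'⟩ := hz
      simp only [Sigma.mk.injEq, heq_eq_eq, g, Prod.mk.injEq] at h
      obtain ⟨⟨h1, h2, h3⟩, h4, h5, h6⟩ := h
      obtain ⟨rfl, h7⟩ := sp_pair ι θ hθ h1
      obtain ⟨rfl, h8⟩ := sp_pair ι θ hθ h4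
      have hb0 : b ≠ 0 := fun h => hA0 (h ▸ hb)
      have hb0' : b' ≠ 0 := fun h => hA0 (h ▸ hb')
      have e1 := mul_right_cancel₀ hb0' (hι h3)
      have e2 := mul_right_cancel₀ hb0 (hι h6)
      subst e1 e2
      have e3 := add_right_cancel h7
      have e4 := add_right_cancel h8
      subst e3 e4
      rfl
  refine ⟨spI T T, ?_, ?_⟩
  · have h1 := Finset.le_card_mul_mul_mulEnergy A A
    calc A.card ^ 6 = A.card ^ 2 * (A.card ^ 2 * A.card ^ 2) := by ring
      _ ≤ A.card ^ 2 * ((A * A).card * mulEnergy A A) := Nat.mul_le_mul_left _ h1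
      _ = (A * A).card * (A.card ^ 2 * mulEnergy A A) := by ring
      _ ≤ _ := Nat.mul_le_mul_left _ hlow
  · intro n hn
    exact ⟨fun h => sp_small p S.card n T T hH hH hKK (hTc.trans hn) (hTc.trans hn) h,
      fun h => sp_large p hp S.card n T T hH hH hKK (hTc.trans hn) (hTc.trans hn) h hSp⟩

end SP


open scoped Pointwise in
theorem sp_sets (p : ℕ) (hp : p.Prime) (hodd : Odd p) (A : Finset (ZMod p)) (hA : 2 ≤ A.card) :
    ∃ I a' s' m' : ℕ, 1 ≤ a' ∧ A.card ≤ 2 * a' ∧ a' ≤ A.card ∧ 1 ≤ s' ∧ s' ≤ a' ^ 2 ∧ s' ≤ (sumSet p A).card ∧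
      m' ≤ (prodSet p A).card ∧ a' ^ 6 ≤ m' * I ∧ ∀ n, a' ^ 2 * s' ≤ 2 ^ n →
      (6 * 2 ^ n < p ^ 2 → I ≤ (n + 1) * 2 ^ n * (73 * Nat.sqrt (6 * 2 ^ n) + 36 * s')) ∧
      (p ^ 2 ≤ 6 * 2 ^ n → p * I ≤ 1308 * (n + 1) * 4 ^ n) := by
  haveI : Fact p.Prime := ⟨hp⟩
  have hp3 : 3 ≤ p := by
    have := hp.two_le
    rcases hodd with ⟨j, rfl⟩
    omega
  let B := A.erase 0
  have hB1 : A.card - 1 ≤ B.card := Finset.pred_card_le_card_erase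
  have hB2 : B ⊆ A := Finset.erase_subset _ _
  obtain ⟨I, h1, h2⟩ := sp_app p hp3 B (Finset.notMem_erase _ _)
  have hBn : B.Nonempty := by rw [← Finset.card_pos]; omega
  refine ⟨I, B.card, (B + B).card, (B * B).card, by omega, by omega, card_le_card hB2,
    ?_, ?_, ?_, ?_, h1, h2⟩
  · exact Finset.card_pos.2 (hBn.add hBn)
  · rw [sq]; exact Finset.card_add_le
  · refine card_le_card (fun x hx => ?_)
    obtain ⟨y, hy, z, hz, rfl⟩ := Finset.mem_add.1 hx
    exact mem_image.2 ⟨(y, z), mem_product.2 ⟨hB2 hy, hB2 hz⟩, rfl⟩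
  · refine card_le_card (fun x hx => ?_)
    obtain ⟨y, hy, z, hz, rfl⟩ := Finset.mem_mul.1 hx
    exact mem_image.2 ⟨(y, z), mem_product.2 ⟨hB2 hy, hB2 hz⟩, rfl⟩

theorem sp_clog (N : ℕ) (hN : 1 ≤ N) : ∃ n, N ≤ 2 ^ n ∧ 2 ^ n ≤ 2 * N := by
  rcases Nat.eq_or_lt_of_le hN with h | h
  · exact ⟨0, by omega, by omega⟩
  · refine ⟨Nat.clog 2 N, Nat.le_pow_clog (by norm_num) _, ?_⟩
    have h1 := Nat.pow_pred_clog_lt_self (b := 2) (by norm_num) h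
    have h2 : 0 < Nat.clog 2 N := Nat.clog_pos (by norm_num) h
    obtain ⟨j, hj⟩ := Nat.exists_eq_succ_of_ne_zero h2.ne'
    rw [hj] at h1 ⊢
    simp only [Nat.pred_succ] at h1
    rw [Nat.succ_eq_add_one, pow_succ]
    omega

theorem le_of_sq_le_sq_sp {a b : ℝ} (h : a ^ 2 ≤ b ^ 2) (hb : 0 ≤ b) : a ≤ b :=
  (le_abs_self a).trans (abs_le_of_sq_le_sq h hb)

theorem sp_num_small (r L I a' m n1 X y s' : ℝ) (hL : 1 ≤ L) (hr : 1 ≤ r) (hm : 0 ≤ m)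
    (hX0 : 0 ≤ X) (hX : X ≤ r ^ 16) (hn : n1 ≤ 6 * L) (hn0 : 0 ≤ n1) (hy0 : 0 ≤ y) (hs0 : 0 ≤ s') (hy : y ^ 2 ≤ 6 * X) (hs : s' ^ 2 ≤ X)
    (ha : r ^ 5 ≤ 2 * a') (hI : I ≤ n1 * X * (73 * y + 36 * s')) (h : a' ^ 6 ≤ m * I) :
    r ^ 6 ≤ 84096 * m * L := by
  have h1 : y ≤ 5/2 * r ^ 8 := by
    refine le_of_sq_le_sq_sp ?_ (by positivity)
    nlinarith [pow_pos (by linarith : 0 < r) 16]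
  have h2 : s' ≤ r ^ 8 := by
    refine le_of_sq_le_sq_sp ?_ (by positivity)
    nlinarith
  have h3 : I ≤ 6 * L * r ^ 16 * (73 * (5/2 * r ^ 8) + 36 * r ^ 8) := by
    refine hI.trans ?_
    gcongr
  have h4 : (r ^ 5) ^ 6 ≤ (2 * a') ^ 6 := by gcongr
  have h5 : m * I ≤ m * (6 * L * r ^ 16 * (73 * (5/2 * r ^ 8) + 36 * r ^ 8)) := by gcongr
  have hr24 : 0 < r ^ 24 := by positivity
  have hmL : 0 ≤ m * L := by positivity
  have h6 : r ^ 6 * r ^ 24 ≤ 84096 * m * L * r ^ 24 := by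
    nlinarith [mul_nonneg hmL hr24.le]
  exact le_of_mul_le_mul_right h6 hr24

theorem sp_num_large (r L I a' m n1 X p : ℝ) (hL : 1 ≤ L) (hr : 1 ≤ r) (hm : 0 ≤ m)
    (hX0 : 0 ≤ X) (hX : X ≤ r ^ 16) (hn : n1 ≤ 6 * L) (hn0 : 0 ≤ n1) (hp : 0 ≤ p)
    (ha : r ^ 5 ≤ 2 * a') (hI : p * I ≤ 1308 * n1 * X ^ 2) (h : a' ^ 6 ≤ m * I) :
    p ≤ 502272 * m * L * r ^ 2 := by
  have h3 : p * I ≤ 1308 * (6 * L) * (r ^ 16) ^ 2 := by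
    refine hI.trans ?_
    gcongr
  have h4 : (r ^ 5) ^ 6 ≤ (2 * a') ^ 6 := by gcongr
  have h5 : m * (p * I) ≤ m * (1308 * (6 * L) * (r ^ 16) ^ 2) := by gcongr
  have h6 : p * a' ^ 6 ≤ p * (m * I) := by gcongr
  have h7 : p * (r ^ 5) ^ 6 ≤ p * (2 * a') ^ 6 := by gcongr
  have hr30 : 0 < r ^ 30 := by positivity
  have h8 : p * r ^ 30 ≤ 502272 * m * L * r ^ 2 * r ^ 30 := by nlinarith
  exact le_of_mul_le_mul_right h8 hr30

theorem stmt13 :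
    ∃ c : ℝ, 0 < c ∧ ∃ C : ℝ, 0 < C ∧
      ∀ (p : ℕ), p.Prime → Odd p →
        ∀ A : Finset (ZMod p), 2 ≤ A.card →
          (1 / 5 * min ((A.card : ℝ) ^ ((6 : ℝ) / 5)) ((p : ℝ) / 2) ≤ ((sumSet p A).card : ℝ)) ∨
          (c * min ((p : ℝ) * (A.card : ℝ) ^ (-(2 : ℝ) / 5)) ((A.card : ℝ) ^ ((6 : ℝ) / 5)) *
              (Real.logb 2 A.card) ^ (-C) ≤ ((prodSet p A).card : ℝ)) := by
  refine ⟨1 / 502272, by norm_num, 1, by norm_num, ?_⟩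
  intro p hp hodd A hA
  by_cases hfirst : 1 / 5 * min ((A.card : ℝ) ^ ((6 : ℝ) / 5)) ((p : ℝ) / 2) ≤ ((sumSet p A).card : ℝ)
  · exact Or.inl hfirst
  right
  obtain ⟨I, a', s', m', ha1, haA, haA', hs1, hsa, hsS, hmP, hI, hn⟩ := sp_sets p hp hodd A hA
  have hA2 : (2 : ℝ) ≤ A.card := by exact_mod_cast hA
  have hA0 : (0 : ℝ) < A.card := by linarith
  set r : ℝ := (A.card : ℝ) ^ ((1 : ℝ) / 5) with hr
  have hr1 : 1 ≤ r := Real.one_le_rpow (by linarith) (by norm_num)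
  have hr0 : 0 < r := by linarith
  have hrp : ∀ k : ℕ, (A.card : ℝ) ^ ((k : ℝ) / 5) = r ^ k := by
    intro k
    rw [hr, ← Real.rpow_natCast, ← Real.rpow_mul hA0.le]
    congr 1; ring
  have hr5 : r ^ 5 = A.card := by
    rw [← hrp 5]; norm_num
  have hr6 : (A.card : ℝ) ^ ((6 : ℝ) / 5) = r ^ 6 := by
    rw [← hrp 6]; norm_num
  have hr2 : (A.card : ℝ) ^ (-(2 : ℝ) / 5) = (r ^ 2)⁻¹ := by
    rw [← hrp 2, neg_div, Real.rpow_neg hA0.le]; norm_num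
  rw [hr6] at hfirst
  rw [hr6, hr2, Real.rpow_neg_one]
  set L := Real.logb 2 A.card with hL
  have hL1 : 1 ≤ L := by
    rw [hL, Real.le_logb_iff_rpow_le (by norm_num) hA0]; simpa using hA2
  have hL0 : 0 < L := by linarith
  have hs : (s' : ℝ) ≤ 1 / 5 * r ^ 6 := by
    push Not at hfirst
    have h1 : (s' : ℝ) ≤ (sumSet p A).card := by exact_mod_cast hsS
    have h2 := min_le_left (r ^ 6) ((p : ℝ) / 2)
    linarith
  obtain ⟨n, hn1, hn2⟩ := sp_clog (a' ^ 2 * s') (by nlinarith [Nat.one_le_pow 2 a' ha1])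
  obtain ⟨hsm, hlg⟩ := hn n hn1
  have ha1R : (r ^ 5 : ℝ) ≤ 2 * a' := by rw [hr5]; exact_mod_cast haA
  have ha2R : (a' : ℝ) ≤ r ^ 5 := by rw [hr5]; exact_mod_cast haA'
  have hn2R : (2 : ℝ) ^ n ≤ 2 * (a' ^ 2 * s') := by exact_mod_cast hn2
  have hX : (2 : ℝ) ^ n ≤ r ^ 16 := by
    have h1 : (a' : ℝ) ^ 2 * s' ≤ (r ^ 5) ^ 2 * (1 / 5 * r ^ 6) := by gcongr
    nlinarith [pow_pos hr0 16]
  have hn1L : (n : ℝ) + 1 ≤ 6 * L := by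
    have h1 : (2 : ℝ) ^ n ≤ 2 * (A.card : ℝ) ^ 4 := by
      have : a' ^ 2 * s' ≤ A.card ^ 4 := by
        calc a' ^ 2 * s' ≤ a' ^ 2 * a' ^ 2 := Nat.mul_le_mul_left _ hsa
          _ = a' ^ 4 := by ring
          _ ≤ _ := Nat.pow_le_pow_left haA' 4
      have h3 : ((a' ^ 2 * s' : ℕ) : ℝ) ≤ ((A.card ^ 4 : ℕ) : ℝ) := by exact_mod_cast this
      push_cast at h3
      linarith
    have h2 := Real.logb_le_logb_of_le (b := 2) (by norm_num) (by positivity) h1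
    rw [Real.logb_mul (by norm_num) (by positivity), Real.logb_pow, Real.logb_pow,
      Real.logb_self_eq_one (by norm_num)] at h2
    push_cast at h2
    linarith
  have hm : (m' : ℝ) ≤ (prodSet p A).card := by exact_mod_cast hmP
  have hIR : (a' : ℝ) ^ 6 ≤ m' * I := by exact_mod_cast hI
  refine le_trans ?_ hm
  rw [← div_eq_mul_inv, div_le_iff₀ hL0]
  by_cases hc : 6 * 2 ^ n < p ^ 2
  · have h1 := hsm hc
    have hsq : Nat.sqrt (6 * 2 ^ n) ^ 2 ≤ 6 * 2 ^ n := by rw [sq]; exact Nat.sqrt_le _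
    have hss : s' ^ 2 ≤ 2 ^ n := by nlinarith
    have h := sp_num_small r L I a' m' (n + 1) (2 ^ n) (Nat.sqrt (6 * 2 ^ n)) s' hL1 hr1
      (by positivity) (by positivity) hX hn1L (by positivity) (by positivity) (by positivity)
      (by exact_mod_cast hsq) (by exact_mod_cast hss) ha1R (by exact_mod_cast h1) hIR
    have h2 := min_le_right ((p : ℝ) * (r ^ 2)⁻¹) (r ^ 6)
    have h3 : 0 ≤ (m' : ℝ) * L := by positivity
    linarith
  · push Not at hc
    have h1 := hlg hc
    have h4 : (4 : ℕ) ^ n = (2 ^ n) ^ 2 := by rw [← pow_mul, mul_comm, pow_mul]; norm_num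
    rw [h4] at h1
    have h := sp_num_large r L I a' m' (n + 1) (2 ^ n) p hL1 hr1
      (by positivity) (by positivity) hX hn1L (by positivity) (by positivity) 
      ha1R (by exact_mod_cast h1) hIR
    have h2 := min_le_left ((p : ℝ) * (r ^ 2)⁻¹) (r ^ 6)
    have h3 : (p : ℝ) * (r ^ 2)⁻¹ ≤ 502272 * m' * L := by
      rw [← div_eq_mul_inv, div_le_iff₀ (by positivity)]; exact h
    linarith
end

section
/- For every odd prime p, every real-valued function f on F_p, every set P ⊆ F_p∖{0}, and every integer k ≥ 1, one has ( ∑_{x∈P} ((f∘f)(x))^k )⁴ ≤ ‖f‖₂^{4k} · E⁺_{2k}(f) · E⁺(P). -/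
open Finset

/-- `(f∘f)(x) = ∑_y f(y)·f(y+x)`. -/
noncomputable def corr (p : ℕ) [NeZero p] (f : ZMod p → ℝ) (x : ZMod p) : ℝ :=
  ∑ y, f y * f (y + x)

/-- `E⁺_m(f) = ∑_x ((f∘f)(x))^m`. -/
noncomputable def EplusF (p : ℕ) [NeZero p] (m : ℕ) (f : ZMod p → ℝ) : ℝ :=
  ∑ x, (corr p f x) ^ m

/-- The additive energy of a set: quadruples `(p₁,p₂,p₃,p₄) ∈ P⁴` with `p₁+p₂ = p₃+p₄`. -/
def addEnergy (p : ℕ) (P : Finset (ZMod p)) : ℕ :=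
  (((P ×ˢ P) ×ˢ P ×ˢ P).filter fun x => x.1.1 + x.1.2 = x.2.1 + x.2.2).card

lemma corr_pow_aux (p : ℕ) [NeZero p] (f : ZMod p → ℝ) (k : ℕ) (a b : ZMod p) :
    ∑ y : Fin k → ZMod p, (∏ i, f (y i + a)) * (∏ i, f (y i + b)) = (corr p f (b - a)) ^ k := by
  have h : corr p f (b - a) = ∑ y, f (y + a) * f (y + b) := by
    unfold corr
    rw [← Equiv.sum_comp (Equiv.addRight a)]
    refine Finset.sum_congr rfl fun y _ => ?_
    simp only [Equiv.coe_addRight]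
    congr 2
    ring
  rw [h, Fintype.sum_pow]
  refine Finset.sum_congr rfl fun y _ => ?_
  rw [Finset.prod_mul_distrib]

lemma step_one (p : ℕ) [NeZero p] (f : ZMod p → ℝ) (P : Finset (ZMod p)) (k : ℕ) :
    (∑ x ∈ P, (corr p f x) ^ k) ^ 2 ≤
      (∑ x, (f x) ^ 2) ^ k * ∑ z ∈ P ×ˢ P, (corr p f (z.2 - z.1)) ^ k := by
  have h1 : ∑ x ∈ P, (corr p f x) ^ k =
      ∑ y : Fin k → ZMod p, (∏ i, f (y i)) * ∑ x ∈ P, ∏ i, f (y i + x) := by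
    simp_rw [Finset.mul_sum]
    rw [Finset.sum_comm]
    refine Finset.sum_congr rfl fun x _ => ?_
    have := corr_pow_aux p f k 0 x
    simp only [add_zero, sub_zero] at this
    exact this.symm
  have h2 : (∑ x, (f x) ^ 2) ^ k = ∑ y : Fin k → ZMod p, (∏ i, f (y i)) ^ 2 := by
    rw [Fintype.sum_pow]
    refine Finset.sum_congr rfl fun y _ => ?_
    rw [Finset.prod_pow]
  have h3 : ∑ z ∈ P ×ˢ P, (corr p f (z.2 - z.1)) ^ k =
      ∑ y : Fin k → ZMod p, (∑ x ∈ P, ∏ i, f (y i + x)) ^ 2 := by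
    simp_rw [sq, Finset.sum_mul_sum]
    rw [Finset.sum_comm, Finset.sum_product]
    refine Finset.sum_congr rfl fun a _ => ?_
    rw [Finset.sum_comm]
    refine Finset.sum_congr rfl fun b _ => ?_
    exact (corr_pow_aux p f k a b).symm
  rw [h1, h2, h3]
  exact Finset.sum_mul_sq_le_sq_mul_sq _ _ _

lemma energy_aux (p : ℕ) [NeZero p] (P : Finset (ZMod p)) :
    (addEnergy p P : ℝ) =
      ∑ d : ZMod p, (∑ z ∈ P ×ˢ P, if z.2 - z.1 = d then (1 : ℝ) else 0) ^ 2 := by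
  have h : addEnergy p P = (((P ×ˢ P) ×ˢ P ×ˢ P).filter
      fun x => x.2.2 - x.2.1 = x.1.2 - x.1.1).card := by
    unfold _root_.addEnergy
    refine Finset.card_nbij' (fun x => ((x.2.2, x.1.1), (x.1.2, x.2.1)))
      (fun x => ((x.1.2, x.2.1), (x.2.2, x.1.1))) ?_ ?_ ?_ ?_
    · rintro ⟨⟨a, b⟩, c, d⟩ hx
      simp at hx ⊢
      refine ⟨by tauto, ?_⟩
      linear_combination -hx.2
    · rintro ⟨⟨a, b⟩, c, d⟩ hx
      simp at hx ⊢
      refine ⟨by tauto, ?_⟩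
      linear_combination -hx.2
    · rintro ⟨⟨a, b⟩, c, d⟩ _
      rfl
    · rintro ⟨⟨a, b⟩, c, d⟩ _
      rfl
  rw [h, Finset.card_filter, Nat.cast_sum]
  simp_rw [sq, Finset.sum_mul_sum]
  rw [Finset.sum_comm, Finset.sum_product]
  refine Finset.sum_congr rfl fun z _ => ?_
  rw [Finset.sum_comm]
  refine Finset.sum_congr rfl fun w _ => ?_
  simp [eq_comm]

lemma step_two (p : ℕ) [NeZero p] (f : ZMod p → ℝ) (P : Finset (ZMod p)) (k : ℕ) :
    (∑ z ∈ P ×ˢ P, (corr p f (z.2 - z.1)) ^ k) ^ 2 ≤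
      EplusF p (2 * k) f * (addEnergy p P : ℝ) := by
  have h : ∑ z ∈ P ×ˢ P, (corr p f (z.2 - z.1)) ^ k =
      ∑ d : ZMod p, (corr p f d) ^ k * ∑ z ∈ P ×ˢ P, if z.2 - z.1 = d then (1 : ℝ) else 0 := by
    simp_rw [Finset.mul_sum]
    rw [Finset.sum_comm]
    refine Finset.sum_congr rfl fun z _ => ?_
    simp
  have h2 : EplusF p (2 * k) f = ∑ d, ((corr p f d) ^ k) ^ 2 := by
    unfold EplusF
    refine Finset.sum_congr rfl fun z _ => ?_
    rw [← pow_mul, mul_comm]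
  rw [h, h2, energy_aux]
  exact Finset.sum_mul_sq_le_sq_mul_sq _ _ _

theorem stmt19 :
    ∀ (p : ℕ) [Fact p.Prime], Odd p →
      ∀ (f : ZMod p → ℝ) (P : Finset (ZMod p)), (0 : ZMod p) ∉ P →
        ∀ k : ℕ, 1 ≤ k →
          (∑ x ∈ P, (corr p f x) ^ k) ^ 4 ≤
            (Real.sqrt (∑ x, (f x) ^ 2)) ^ (4 * k) * EplusF p (2 * k) f *
              (addEnergy p P : ℝ) := by
  intro p _ _ f P _ k _
  have h0 : (0 : ℝ) ≤ ∑ x, (f x) ^ 2 := Finset.sum_nonneg fun _ _ => sq_nonneg _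
  have hs : (Real.sqrt (∑ x, (f x) ^ 2)) ^ (4 * k) = ((∑ x, (f x) ^ 2) ^ k) ^ 2 := by
    rw [show 4 * k = 2 * (k * 2) by ring, pow_mul, Real.sq_sqrt h0, pow_mul]
  rw [hs]
  calc (∑ x ∈ P, (corr p f x) ^ k) ^ 4 = ((∑ x ∈ P, (corr p f x) ^ k) ^ 2) ^ 2 := by ring
    _ ≤ ((∑ x, (f x) ^ 2) ^ k * ∑ z ∈ P ×ˢ P, (corr p f (z.2 - z.1)) ^ k) ^ 2 :=
        pow_le_pow_left₀ (sq_nonneg _) (step_one p f P k) 2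
    _ = ((∑ x, (f x) ^ 2) ^ k) ^ 2 * (∑ z ∈ P ×ˢ P, (corr p f (z.2 - z.1)) ^ k) ^ 2 := by
        rw [mul_pow]
    _ ≤ ((∑ x, (f x) ^ 2) ^ k) ^ 2 * (EplusF p (2 * k) f * (addEnergy p P : ℝ)) :=
        mul_le_mul_of_nonneg_left (step_two p f P k) (sq_nonneg _)
    _ = _ := by rw [mul_assoc]
end
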